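/- arXiv:2302.05946 — 2 statements merged into one kernel-verified Lean document; each statement's English description precedes it below -/
import Mathlib

section
/- For every number field K there exists a constant c_K > 0, depending only on K, such that the following holds: if A = {a_1 + I_1, …, a_n + I_n} is a covering system of O_K of multiplicity s whose moduli I_1, …, I_n are all distinguishable ideals, then min_{1 ≤ i ≤ n} N(I_i) ≤ exp(c_K · log²(s+1) / log log(s+2)). -/
/-!
The proof is the distortion method of Balister, Bollobás, Morris, Sahasrabudhe and Tiba, carried
over to ideals. All moduli are products of powers of primes in a finite set `T`, so everything
takes place in the finite ring `𝓞 K ⧸ Q` with `Q = ∏_{q ∈ T} q ^ γ`, `γ` large. Suppose every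
modulus has norm larger than the claimed bound `X`; the aim is to show that the classes cannot
cover `𝓞 K ⧸ Q`.

* Classes whose moduli only involve primes of norm at most `y`, where `y` is a fixed power of
  `O(s + 1)`, are controlled by the uniform measure. Their total density is at most
  `X ^ (-σ) · s · ∏_{N q ≤ y} (1 - N(q) ^ (σ - 1))⁻¹` by Rankin's trick (`smooth_le`), and with
  `y ^ σ = √(log (s + 2))` this is below `1/4` (`parameters`).
* The remaining primes are processed in order of increasing norm. At a prime `p` the current
  probability measure is modified inside the fibres over the residues modulo the primes already
  treated, so that it gives little mass to the classes whose moduli involve `p` and otherwise only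
  treated primes, while its density at most doubles (`distort`, `good_step`). The mass they keep
  is at most the second moment of the proportion of a fibre they cover, which is at most
  `16 s² N(p) ^ (-2) exp (64 ∑_{N q ≤ N p} 1 / N(q))` (`second_moment_le`). Earlier classes keep
  their mass, because the measure of fibres does not change.
* Hence a covering forces the two contributions to add up to at least `1` (`one_le_of_cover`). A
  weak form of Mertens' theorem, `∑_{N q ≤ x} 1 / N(q) = O(√(log x))` (`sum_inv_norm_le`), shows
  that the large primes contribute at most `1/4` (`large_le`), a contradiction.
-/

set_option maxHeartbeats 1000000
set_option synthInstance.maxHeartbeats 1000000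

open scoped Classical
open NumberField

/-- `p` is the unique prime ideal factor of `I` of largest norm. -/
def IsPmin {K : Type*} [Field K] [NumberField K] (I p : Ideal (𝓞 K)) : Prop :=
  p.IsPrime ∧ p ∣ I ∧ ∀ q : Ideal (𝓞 K), q.IsPrime → q ∣ I → q ≠ p →
    Ideal.absNorm q < Ideal.absNorm p

/-- A nonzero proper ideal is distinguishable if it has a unique prime factor of largest norm. -/
def Distinguishable {K : Type*} [Field K] [NumberField K] (I : Ideal (𝓞 K)) : Prop :=
  I ≠ ⊥ ∧ I ≠ ⊤ ∧ ∃ p : Ideal (𝓞 K), IsPmin I p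

namespace MinMod

/-! ### Averages on a finite abelian group and one distortion step -/

section Mean

variable {G : Type*}

/-- The indicator function of a set, with real values. -/
noncomputable def ind (B : Set G) (x : G) : ℝ := if x ∈ B then 1 else 0

lemma ind_congr {B : Set G} {x y : G} (h : x ∈ B ↔ y ∈ B) : ind B x = ind B y := by
  simp only [ind, h]

lemma ind_nonneg (B : Set G) (x : G) : 0 ≤ ind B x := by
  unfold ind; split_ifs <;> norm_num

lemma ind_le_one (B : Set G) (x : G) : ind B x ≤ 1 := by
  unfold ind; split_ifs <;> norm_num

variable [Fintype G]

/-- The mean value of a function on a finite set, i.e. its expectation for the uniform measure.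
A probability measure is encoded by its density `w` with `mean w = 1`. -/
noncomputable def mean (f : G → ℝ) : ℝ := (∑ x, f x) / Fintype.card G

lemma mean_mono {f g : G → ℝ} (h : ∀ x, f x ≤ g x) : mean f ≤ mean g := by
  unfold mean
  gcongr with x
  exact h x

lemma mean_add (f g : G → ℝ) : mean (fun x => f x + g x) = mean f + mean g := by
  simp [mean, Finset.sum_add_distrib, add_div]

lemma mean_const_mul (c : ℝ) (f : G → ℝ) : mean (fun x => c * f x) = c * mean f := by
  simp [mean, ← Finset.mul_sum, mul_div_assoc]

lemma mean_sum {ι : Type*} (s : Finset ι) (f : ι → G → ℝ) :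
    mean (fun x => ∑ i ∈ s, f i x) = ∑ i ∈ s, mean (f i) := by
  unfold mean
  rw [Finset.sum_comm, Finset.sum_div]

end Mean

section Group

variable {G : Type*} [AddCommGroup G] [Fintype G]

/-- The conditional expectation given the coset of `H`: the average of `f` over `x + H`. -/
noncomputable def avg (H : AddSubgroup G) (f : G → ℝ) (x : G) : ℝ :=
  (∑ h : H, f (x + h)) / Fintype.card H

/-- `f` is constant on cosets of `H`. -/
def CosetInv (H : AddSubgroup G) (f : G → ℝ) : Prop := ∀ x, ∀ h ∈ H, f (x + h) = f x

lemma card_pos_real (H : AddSubgroup G) : (0 : ℝ) < Fintype.card H := by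
  exact_mod_cast Fintype.card_pos

lemma mean_one : mean (fun _ : G => (1 : ℝ)) = 1 := by
  have : (Fintype.card G : ℝ) ≠ 0 := by exact_mod_cast Fintype.card_ne_zero
  simp [mean, this]

/-- The tower property of conditional expectation. -/
lemma mean_mul_avg (H : AddSubgroup G) {w : G → ℝ} (hw : CosetInv H w) (f : G → ℝ) :
    mean (fun x => w x * avg H f x) = mean (fun x => w x * f x) := by
  unfold mean avg
  congr 1
  have hc := (card_pos_real H).ne'
  have h1 : ∀ x, w x * ((∑ h : H, f (x + h)) / Fintype.card H)
      = (∑ h : H, w (x + h) * f (x + h)) / Fintype.card H := by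
    intro x
    rw [← mul_div_assoc, Finset.mul_sum]
    congr 1
    refine Finset.sum_congr rfl fun h _ => ?_
    rw [hw x h h.2]
  simp_rw [h1]
  rw [← Finset.sum_div, Finset.sum_comm]
  have h2 : ∀ h : H, ∑ x, w (x + h) * f (x + h) = ∑ x, w x * f x := fun h =>
    Fintype.sum_equiv (Equiv.addRight (h : G)) _ _ (fun x => rfl)
  simp_rw [h2]
  simp

lemma avg_inv (H : AddSubgroup G) (f : G → ℝ) : CosetInv H (avg H f) := by
  intro x h hh
  unfold avg
  congr 1
  exact Fintype.sum_equiv (Equiv.addLeft (⟨h, hh⟩ : H)) _ _ (fun y => by simp [add_assoc])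

lemma avg_nonneg (H : AddSubgroup G) {f : G → ℝ} (hf : ∀ x, 0 ≤ f x) (x : G) :
    0 ≤ avg H f x := by
  unfold avg
  exact div_nonneg (Finset.sum_nonneg fun h _ => hf _) (by positivity)

lemma avg_mono (H : AddSubgroup G) {f g : G → ℝ} (h : ∀ x, f x ≤ g x) (x : G) :
    avg H f x ≤ avg H g x := by
  unfold avg
  gcongr with y
  exact h _

lemma avg_sum {ι : Type*} (H : AddSubgroup G) (s : Finset ι) (f : ι → G → ℝ) (x : G) :
    avg H (fun x => ∑ i ∈ s, f i x) x = ∑ i ∈ s, avg H (f i) x := by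
  unfold avg
  rw [Finset.sum_comm, Finset.sum_div]

/-- A coset of `I` meets a translate of `H` in at most `|H ∩ I|` points, and in none unless
the translate lies in `a + M`, where `M` contains both `H` and `I`. -/
lemma avg_coset_le (H I M : AddSubgroup G) (hH : H ≤ M) (hI : I ≤ M) (a x : G) :
    avg H (ind {z | z - a ∈ I}) x ≤
      ((Fintype.card (H ⊓ I : AddSubgroup G) : ℝ) / Fintype.card H) * ind {z | z - a ∈ M} x := by
  have hc := card_pos_real H
  by_cases hx : ∃ h₀ : H, x + h₀ - a ∈ I
  · obtain ⟨h₀, h0⟩ := hx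
    have hM : x - a ∈ M := by
      have := M.sub_mem (hI h0) (hH h₀.2)
      convert this using 1; abel
    have : ind {z | z - a ∈ M} x = 1 := by simp [ind, hM]
    rw [this, mul_one]
    unfold avg ind
    gcongr
    simp only [Set.mem_ofPred_eq, Finset.sum_boole]
    rw [← Fintype.card_subtype]
    norm_cast
    refine Fintype.card_le_of_injective
      (fun h => ⟨(h.1 : G) - h₀, H.sub_mem h.1.2 h₀.2, ?_⟩) ?_
    · change (h.1 : G) - h₀ ∈ I
      have := I.sub_mem h.2 h0
      convert this using 1; abel
    · intro h h' hh
      have : (h.1 : G) - h₀ = h'.1 - h₀ := congrArg Subtype.val hh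
      exact Subtype.ext (Subtype.ext (sub_left_injective this))
  · push Not at hx
    have : avg H (ind {z | z - a ∈ I}) x = 0 := by
      unfold avg ind
      simp [hx]
    rw [this]
    exact mul_nonneg (by positivity) (ind_nonneg _ _)

/-- One step of the distortion method with threshold `1/2`. The density `w` is modified inside the
fibres of `G → G/H` so as to avoid `B` completely on fibres where `B` has proportion `α < 1/2`, and
to avoid it as much as the bound `w' ≤ 2 w` permits on the others. -/
lemma distort (H H' : AddSubgroup G) (hle : H' ≤ H) {w : G → ℝ} (hw0 : ∀ x, 0 ≤ w x)
    (hw : CosetInv H w) (B : Set G) (hB : CosetInv H' (ind B)) :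
    ∃ w' : G → ℝ, (∀ x, 0 ≤ w' x) ∧ CosetInv H' w' ∧ (∀ x, w' x ≤ 2 * w x) ∧
      (∀ f, CosetInv H f → mean (fun x => w' x * f x) = mean (fun x => w x * f x)) ∧
      mean (fun x => w' x * ind B x) ≤ mean (fun x => w x * (avg H (ind B) x) ^ 2) := by
  set α := avg H (ind B) with hα
  have hα0 : ∀ x, 0 ≤ α x := avg_nonneg H (ind_nonneg B)
  have hαI : CosetInv H α := avg_inv H _
  -- the relative density, as an affine function of the indicator of `B` on each fibre
  set u : G → ℝ := fun x => if α x < 1 / 2 then 1 / (1 - α x) else 2 with hu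
  set v : G → ℝ := fun x => if α x < 1 / 2 then 1 / (1 - α x) else 1 / α x with hv
  have huI : CosetInv H u := fun x h hh => by simp only [hu]; rw [hαI x h hh]
  have hvI : CosetInv H v := fun x h hh => by simp only [hv]; rw [hαI x h hh]
  have hmul : ∀ {f g : G → ℝ}, CosetInv H f → CosetInv H g → CosetInv H (fun x => f x * g x) :=
    fun hf hg x h hh => by simp only []; rw [hf x h hh, hg x h hh]
  have huv : ∀ x, u x - v x * α x = 1 := by
    intro x
    simp only [hu, hv]
    split_ifs with h
    · have : 1 - α x ≠ 0 := by linarith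
      field_simp
    · have : α x ≠ 0 := by linarith
      field_simp; norm_num
  have hu2 : ∀ x, u x ≤ 2 := by
    intro x
    simp only [hu]
    split_ifs with h
    · rw [div_le_iff₀ (by linarith)]; linarith
    · exact le_rfl
  have hv0 : ∀ x, 0 ≤ v x := by
    intro x
    simp only [hv]
    split_ifs with h
    · exact div_nonneg zero_le_one (by linarith)
    · exact div_nonneg zero_le_one (hα0 x)
  have huv0 : ∀ x, v x ≤ u x := by
    intro x
    simp only [hv, hu]
    split_ifs with h
    · exact le_rfl
    · rw [div_le_iff₀ (by linarith)]; linarith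
  refine ⟨fun x => w x * (u x - v x * ind B x), ?_, ?_, ?_, ?_, ?_⟩
  · intro x
    refine mul_nonneg (hw0 x) ?_
    have := mul_le_mul_of_nonneg_left (ind_le_one B x) (hv0 x)
    linarith [huv0 x]
  · intro x h hh
    simp only []
    rw [hw x h (hle hh), huI x h (hle hh), hvI x h (hle hh), hB x h hh]
  · intro x
    have := mul_nonneg (hv0 x) (ind_nonneg B x)
    nlinarith [hw0 x, hu2 x]
  · intro f hf
    have h1 := mean_mul_avg H (hmul (hmul hw hvI) hf) (ind B)
    have h2 : mean (fun x => w x * f x) =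
        mean (fun x => w x * u x * f x) + mean (fun x => (-1) * (w x * v x * f x * α x)) := by
      rw [← mean_add]
      congr 1; funext x
      linear_combination (-(w x * f x)) * huv x
    rw [h2, mean_const_mul, h1, ← mean_const_mul, ← mean_add]
    congr 1; funext x; ring
  · have h1 := mean_mul_avg H (hmul hw huI) (ind B)
    have h2 := mean_mul_avg H (hmul hw hvI) (ind B)
    have h3 : mean (fun x => w x * (u x - v x * ind B x) * ind B x) =
        mean (fun x => w x * u x * ind B x) + (-1) * mean (fun x => w x * v x * ind B x) := by
      rw [← mean_const_mul, ← mean_add]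
      congr 1; funext x
      have : ind B x * ind B x = ind B x := by unfold ind; split_ifs <;> norm_num
      linear_combination (-(w x * v x)) * this
    rw [h3, ← h1, ← h2, ← mean_const_mul, ← mean_add]
    refine mean_mono fun x => ?_
    have h4 : (u x - v x) * α x ≤ α x ^ 2 := by
      simp only [hu, hv]
      split_ifs with h
      · simp; positivity
      · have : α x ≠ 0 := by linarith
        have h5 : (2 - 1 / α x) * α x = 2 * α x - 1 := by field_simp
        rw [h5]; nlinarith [sq_nonneg (α x - 1)]
    have := mul_le_mul_of_nonneg_left h4 (hw0 x)
    simp only [← hα] at *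
    linarith

end Group

/-! ### Cosets of ideals in a finite quotient -/

section Ideals

set_option linter.unusedSectionVars false

variable {K : Type*} [Field K] [NumberField K]

/-- The ideal `∏_{q ∈ S} q ^ e q`, written as an intersection (the two agree when the elements of
`S` are prime, see `idealOf_eq_prod`). -/
def idealOf (S : Finset (Ideal (𝓞 K))) (e : Ideal (𝓞 K) → ℕ) : Ideal (𝓞 K) :=
  S.inf fun q => q ^ e q

lemma idealOf_insert (S : Finset (Ideal (𝓞 K))) (p : Ideal (𝓞 K)) (e : Ideal (𝓞 K) → ℕ) :
    idealOf (insert p S) e = p ^ e p ⊓ idealOf S e := by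
  simp [idealOf]

lemma idealOf_eq_prod {S : Finset (Ideal (𝓞 K))} (hS : ∀ q ∈ S, Prime q)
    (e : Ideal (𝓞 K) → ℕ) : idealOf S e = ∏ q ∈ S, q ^ e q :=
  IsDedekindDomain.inf_pow_eq_prod_of_prime S (fun q => q) e hS (fun _ _ _ _ h => h)

lemma idealOf_anti (S : Finset (Ideal (𝓞 K))) {e f : Ideal (𝓞 K) → ℕ} (h : ∀ q ∈ S, e q ≤ f q) :
    idealOf S f ≤ idealOf S e :=
  Finset.inf_mono_fun fun q hq => Ideal.pow_le_pow_right (h q hq)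

lemma idealOf_subset {S T : Finset (Ideal (𝓞 K))} (h : S ⊆ T) (e : Ideal (𝓞 K) → ℕ) :
    idealOf T e ≤ idealOf S e :=
  Finset.inf_mono h

lemma idealOf_congr {S T : Finset (Ideal (𝓞 K))} (h : S ⊆ T) {e : Ideal (𝓞 K) → ℕ}
    (he : ∀ q ∈ T, q ∉ S → e q = 0) : idealOf T e = idealOf S e := by
  refine le_antisymm (idealOf_subset h e) ?_
  refine Finset.le_inf fun q hq => ?_
  by_cases hqS : q ∈ S
  · exact Finset.inf_le hqS
  · simp [he q hq hqS]

/-- Intersecting ideals takes the maximum of the exponents. -/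
lemma idealOf_inf (S : Finset (Ideal (𝓞 K))) (e f : Ideal (𝓞 K) → ℕ) :
    idealOf S e ⊓ idealOf S f ≤ idealOf S (fun q => max (e q) (f q)) := by
  refine Finset.le_inf fun q hq => ?_
  beta_reduce
  rcases le_total (e q) (f q) with h | h
  · rw [max_eq_right h]
    exact inf_le_right.trans (Finset.inf_le hq)
  · rw [max_eq_left h]
    exact inf_le_left.trans (Finset.inf_le hq)

lemma absNorm_idealOf {S : Finset (Ideal (𝓞 K))} (hS : ∀ q ∈ S, Prime q)
    (e : Ideal (𝓞 K) → ℕ) :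
    (Ideal.absNorm (idealOf S e) : ℝ) = ∏ q ∈ S, (Ideal.absNorm q : ℝ) ^ e q := by
  rw [idealOf_eq_prod hS, map_prod]
  simp

/-- The image of the ideal `I` in the additive group of `𝓞 K ⧸ Q`. -/
def sub (Q I : Ideal (𝓞 K)) : AddSubgroup (𝓞 K ⧸ Q) :=
  (I.map (Ideal.Quotient.mk Q)).toAddSubgroup

lemma mk_mem_sub {Q I : Ideal (𝓞 K)} (h : Q ≤ I) (x : 𝓞 K) :
    Ideal.Quotient.mk Q x ∈ sub Q I ↔ x ∈ I :=
  Ideal.mem_quotient_iff_mem h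

lemma sub_mono {Q I J : Ideal (𝓞 K)} (h : I ≤ J) : sub Q I ≤ sub Q J :=
  Ideal.map_mono h

lemma sub_inf {Q I J : Ideal (𝓞 K)} (hI : Q ≤ I) (hJ : Q ≤ J) :
    sub Q I ⊓ sub Q J = sub Q (I ⊓ J) := by
  ext z
  obtain ⟨x, rfl⟩ := Ideal.Quotient.mk_surjective z
  rw [AddSubgroup.mem_inf, mk_mem_sub hI, mk_mem_sub hJ, mk_mem_sub (le_inf hI hJ)]
  rfl

lemma card_sub {Q I : Ideal (𝓞 K)} (h : Q ≤ I) [Fintype (𝓞 K ⧸ Q)] :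
    Fintype.card (sub Q I) * Ideal.absNorm I = Fintype.card (𝓞 K ⧸ Q) := by
  have h1 := (sub Q I).card_mul_index
  have h2 : (sub Q I).index = Ideal.absNorm I := by
    rw [Ideal.absNorm_apply, Submodule.cardQuot_apply]
    exact Nat.card_congr (DoubleQuot.quotQuotEquivQuotOfLE h).toEquiv
  rw [h2] at h1
  rw [← Nat.card_eq_fintype_card, ← Nat.card_eq_fintype_card, h1]

/-- The residue class `a + I`, as a subset of `𝓞 K ⧸ Q`. -/
def cls (Q : Ideal (𝓞 K)) (a : 𝓞 K) (I : Ideal (𝓞 K)) : Set (𝓞 K ⧸ Q) :=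
  {z | z - Ideal.Quotient.mk Q a ∈ sub Q I}

lemma mem_cls_add {Q I : Ideal (𝓞 K)} {H : AddSubgroup (𝓞 K ⧸ Q)} (hH : H ≤ sub Q I) (a : 𝓞 K)
    (x : 𝓞 K ⧸ Q) {h : 𝓞 K ⧸ Q} (hh : h ∈ H) : x + h ∈ cls Q a I ↔ x ∈ cls Q a I := by
  change x + h - _ ∈ sub Q I ↔ x - _ ∈ sub Q I
  rw [add_sub_right_comm, AddSubgroup.add_mem_cancel_right _ (hH hh)]

lemma cosetInv_cls {Q I : Ideal (𝓞 K)} {H : AddSubgroup (𝓞 K ⧸ Q)} (hH : H ≤ sub Q I)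
    (a : 𝓞 K) : CosetInv H (ind (cls Q a I)) := by
  intro x h hh
  unfold ind
  simp only [mem_cls_add hH a x hh]

/-- Two residue classes of `idealOf S e` and `idealOf S f` are disjoint or meet inside one residue
class of the ideal with the maximal exponents. -/
lemma ind_cls_mul_le {Q : Ideal (𝓞 K)} {S : Finset (Ideal (𝓞 K))} {e f : Ideal (𝓞 K) → ℕ}
    (he : Q ≤ idealOf S e) (hf : Q ≤ idealOf S f) (a b : 𝓞 K) :
    ∃ c : 𝓞 K, ∀ x, ind (cls Q a (idealOf S e)) x * ind (cls Q b (idealOf S f)) x ≤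
      ind (cls Q c (idealOf S fun q => max (e q) (f q))) x := by
  by_cases hz : ∃ z, z ∈ cls Q a (idealOf S e) ∧ z ∈ cls Q b (idealOf S f)
  · obtain ⟨z, hz1, hz2⟩ := hz
    obtain ⟨c, rfl⟩ := Ideal.Quotient.mk_surjective z
    refine ⟨c, fun x => ?_⟩
    by_cases hx : x ∈ cls Q a (idealOf S e) ∧ x ∈ cls Q b (idealOf S f)
    · have : x ∈ cls Q c (idealOf S fun q => max (e q) (f q)) := by
        refine sub_mono (idealOf_inf S e f) ?_
        rw [← sub_inf he hf]
        constructor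
        · have := (sub Q _).sub_mem hx.1 hz1
          simpa using this
        · have := (sub Q _).sub_mem hx.2 hz2
          simpa using this
      simp [ind, hx.1, hx.2, this]
    · have h0 : ind (cls Q a (idealOf S e)) x * ind (cls Q b (idealOf S f)) x = 0 := by
        by_cases h1 : x ∈ cls Q a (idealOf S e)
        · have h2 : x ∉ cls Q b (idealOf S f) := fun h2 => hx ⟨h1, h2⟩
          simp [ind, h2]
        · simp [ind, h1]
      rw [h0]
      exact ind_nonneg _ _
  · refine ⟨0, fun x => ?_⟩
    have h0 : ind (cls Q a (idealOf S e)) x * ind (cls Q b (idealOf S f)) x = 0 := by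
      by_cases h1 : x ∈ cls Q a (idealOf S e)
      · have h2 : x ∉ cls Q b (idealOf S f) := fun h2 => hz ⟨x, h1, h2⟩
        simp [ind, h2]
      · simp [ind, h1]
    rw [h0]
    exact ind_nonneg _ _

/-- Conditional on its residue modulo the `S`-part, an element lies in a given class of
`idealOf (insert p S) f` with probability at most `N(p) ^ (-f p)`. -/
lemma avg_cls_le {T S : Finset (Ideal (𝓞 K))} {p : Ideal (𝓞 K)} (hT : ∀ q ∈ T, Prime q)
    (hS : insert p S ⊆ T) (hp : p ∉ S) {γ : ℕ} {Q : Ideal (𝓞 K)}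
    (hQ : Q = idealOf T fun _ => γ) [Fintype (𝓞 K ⧸ Q)] {f : Ideal (𝓞 K) → ℕ} (hf : ∀ q, f q ≤ γ) (c : 𝓞 K)
    (x : 𝓞 K ⧸ Q) :
    avg (sub Q (idealOf S fun _ => γ)) (ind (cls Q c (idealOf (insert p S) f))) x ≤
      ((Ideal.absNorm p : ℝ) ^ f p)⁻¹ * ind (cls Q c (idealOf S f)) x := by
  have hST : S ⊆ T := (Finset.subset_insert p S).trans hS
  have hQS : Q ≤ idealOf S fun _ => γ := hQ ▸ idealOf_subset hST _
  have hQI : Q ≤ idealOf (insert p S) f :=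
    hQ ▸ (idealOf_subset hS _).trans (idealOf_anti _ fun q _ => hf q)
  have hle : idealOf (insert p S) f ≤ idealOf S f := idealOf_subset (Finset.subset_insert p S) _
  have key := avg_coset_le (sub Q (idealOf S fun _ => γ)) (sub Q (idealOf (insert p S) f))
    (sub Q (idealOf S f)) (sub_mono (idealOf_anti _ fun q _ => hf q)) (sub_mono hle)
    (Ideal.Quotient.mk Q c) x
  refine key.trans ?_
  refine mul_le_mul_of_nonneg_right (le_of_eq ?_) (ind_nonneg _ _)
  -- the exponents of the intersection are `γ` on `S` and `f p` at `p`
  have hinf : (idealOf S fun _ => γ) ⊓ idealOf (insert p S) f =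
      idealOf (insert p S) (fun q => if q = p then f p else γ) := by
    have h1 : idealOf S (fun q => if q = p then f p else γ) = idealOf S fun _ => γ := by
      refine Finset.inf_congr rfl fun q hq => ?_
      have : q ≠ p := fun h => hp (h ▸ hq)
      simp [this]
    rw [idealOf_insert, idealOf_insert, h1]
    simp only [if_true]
    rw [inf_left_comm, inf_eq_left.mpr (idealOf_anti S fun q _ => hf q)]
  have hcard1 := card_sub hQS
  have hcard2 := card_sub (le_inf hQS hQI)
  have hcong : Fintype.card (sub Q (idealOf S fun _ => γ) ⊓ sub Q (idealOf (insert p S) f) :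
      AddSubgroup (𝓞 K ⧸ Q)) =
      Fintype.card (sub Q ((idealOf S fun _ => γ) ⊓ idealOf (insert p S) f)) := by
    rw [← Nat.card_eq_fintype_card, ← Nat.card_eq_fintype_card, sub_inf hQS hQI]
  have hn : ∀ q ∈ insert p S, (Ideal.absNorm q : ℝ) ≠ 0 := by
    intro q hq
    have := (hT q (hS hq)).ne_zero
    rw [Nat.cast_ne_zero, Ne, Ideal.absNorm_eq_zero_iff]
    exact this
  have hN1 := absNorm_idealOf (fun q hq => hT q (hST hq)) (fun _ => γ)
  have hN2 := absNorm_idealOf (fun q hq => hT q (hS hq)) (fun q => if q = p then f p else γ)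
  rw [Finset.prod_insert hp] at hN2
  have hN3 : ∏ q ∈ S, (Ideal.absNorm q : ℝ) ^ (if q = p then f p else γ) =
      ∏ q ∈ S, (Ideal.absNorm q : ℝ) ^ γ := by
    refine Finset.prod_congr rfl fun q hq => ?_
    have : q ≠ p := fun h => hp (h ▸ hq)
    simp [this]
  rw [hN3, ← hN1, ← hinf] at hN2
  simp only [if_true] at hN2
  have hpos : (Ideal.absNorm (idealOf S fun _ => γ) : ℝ) ≠ 0 := by
    rw [hN1]
    exact Finset.prod_ne_zero_iff.mpr fun q hq => pow_ne_zero _ (hn q (Finset.mem_insert_of_mem hq))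
  have hpp : (Ideal.absNorm p : ℝ) ^ f p ≠ 0 := pow_ne_zero _ (hn p (Finset.mem_insert_self _ _))
  rw [hcong]
  rw [← hcard2] at hcard1
  have hcr : (Fintype.card (sub Q (idealOf S fun _ => γ)) : ℝ) *
      Ideal.absNorm (idealOf S fun _ => γ) =
      Fintype.card (sub Q ((idealOf S fun _ => γ) ⊓ idealOf (insert p S) f)) *
      (Ideal.absNorm ((idealOf S fun _ => γ) ⊓ idealOf (insert p S) f)) := by exact_mod_cast hcard1
  rw [hN2] at hcr
  have hH := (card_pos_real (sub Q (idealOf S fun _ => γ))).ne'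
  rw [div_eq_iff hH, eq_comm, inv_mul_eq_iff_eq_mul₀ hpp]
  refine mul_right_cancel₀ hpos ?_
  linarith

end Ideals

/-! ### The distorted measures -/

section Distortion

variable {K : Type*} [Field K] [NumberField K] {ι : Type*} [Fintype ι]

/-- The local factor bounding the distorted measure of a residue class: `1` for exponent `0` and
`2 N ^ (-j)` for exponent `j > 0`. -/
noncomputable def loc (N : ℝ) (j : ℕ) : ℝ := if j = 0 then 1 else 2 * (N ^ j)⁻¹

lemma loc_nonneg (N : ℕ) (j : ℕ) : 0 ≤ loc N j := by
  unfold loc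
  split_ifs
  · exact zero_le_one
  · positivity

/-- `w` is the density of a probability measure on `𝓞 K ⧸ Q` which depends only on residues modulo
the `S`-part of `Q` and gives residue classes roughly the mass they should have. -/
structure Good (Q : Ideal (𝓞 K)) [Fintype (𝓞 K ⧸ Q)] (γ : ℕ) (S : Finset (Ideal (𝓞 K)))
    (w : 𝓞 K ⧸ Q → ℝ) : Prop where
  nonneg : ∀ x, 0 ≤ w x
  inv : CosetInv (sub Q (idealOf S fun _ => γ)) w
  mean_eq : mean w = 1
  le : ∀ (c : 𝓞 K) (f : Ideal (𝓞 K) → ℕ), (∀ q, f q ≤ γ) →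
    mean (fun x => w x * ind (cls Q c (idealOf S f)) x) ≤ ∏ q ∈ S, loc (Ideal.absNorm q) (f q)

/-- The indices of the moduli all of whose prime factors in `T` belong to `S`. -/
noncomputable def supp (T : Finset (Ideal (𝓞 K))) (e : ι → Ideal (𝓞 K) → ℕ)
    (S : Finset (Ideal (𝓞 K))) : Finset ι :=
  Finset.univ.filter fun k => ∀ q ∈ T, q ∉ S → e k q = 0

/-- The part of `𝓞 K ⧸ Q` covered by the classes whose moduli are supported on `S`. -/
def cov (Q : Ideal (𝓞 K)) (T : Finset (Ideal (𝓞 K))) (a : ι → 𝓞 K) (e : ι → Ideal (𝓞 K) → ℕ)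
    (S : Finset (Ideal (𝓞 K))) : Set (𝓞 K ⧸ Q) :=
  {z | ∃ k ∈ supp T e S, z ∈ cls Q (a k) (idealOf T (e k))}

lemma mean_cls {Q I : Ideal (𝓞 K)} [Fintype (𝓞 K ⧸ Q)] (h : Q ≤ I) (c : 𝓞 K) :
    mean (ind (cls Q c I)) = (Ideal.absNorm I : ℝ)⁻¹ := by
  have hc := card_sub h
  have h0 : Fintype.card (𝓞 K ⧸ Q) ≠ 0 := Fintype.card_ne_zero
  have hI : (Ideal.absNorm I : ℝ) ≠ 0 := by
    rw [← hc] at h0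
    exact_mod_cast right_ne_zero_of_mul h0
  have hs : ∑ x, ind (cls Q c I) x = Fintype.card (sub Q I) := by
    unfold ind
    rw [Finset.sum_boole, ← Fintype.card_subtype]
    norm_cast
    refine Fintype.card_congr ⟨fun z => ⟨z.1 - Ideal.Quotient.mk Q c, z.2⟩,
      fun h => ⟨h.1 + Ideal.Quotient.mk Q c, ?_⟩, fun z => ?_, fun h => ?_⟩
    · change h.1 + Ideal.Quotient.mk Q c - Ideal.Quotient.mk Q c ∈ sub Q I
      simp [h.2]
    · simp
    · simp
  unfold mean
  rw [hs, ← hc]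
  have := (card_pos_real (sub Q I)).ne'
  push_cast
  field_simp

/-- The uniform measure satisfies the requirements for every `S`. -/
lemma good_one {T S : Finset (Ideal (𝓞 K))} (hT : ∀ q ∈ T, Prime q) (hS : S ⊆ T) {γ : ℕ}
    {Q : Ideal (𝓞 K)} (hQ : Q = idealOf T fun _ => γ) [Fintype (𝓞 K ⧸ Q)] :
    Good Q γ S (fun _ => 1) where
  nonneg _ := zero_le_one
  inv _ _ _ := rfl
  mean_eq := mean_one
  le c f hf := by
    have hQI : Q ≤ idealOf S f := by
      rw [hQ]
      exact (idealOf_subset hS _).trans (idealOf_anti _ fun q _ => hf q)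
    simp only [one_mul]
    change mean (ind (cls Q c (idealOf S f))) ≤ _
    rw [mean_cls hQI, absNorm_idealOf fun q hq => hT q (hS hq), ← Finset.prod_inv_distrib]
    refine Finset.prod_le_prod (fun q _ => by positivity) fun q _ => ?_
    unfold loc
    split_ifs with h
    · simp [h]
    · have : 0 ≤ ((Ideal.absNorm q : ℝ) ^ f q)⁻¹ := by positivity
      linarith

/-- Inductive step: processing the prime `p` costs at most the second moment of the proportion of
the fibres covered by the new classes, expanded as a sum over pairs of new classes. -/
lemma good_step {T S : Finset (Ideal (𝓞 K))} {p : Ideal (𝓞 K)} (hT : ∀ q ∈ T, Prime q)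
    (hS : insert p S ⊆ T) (hp : p ∉ S) {γ : ℕ} {Q : Ideal (𝓞 K)}
    (hQ : Q = idealOf T fun _ => γ) [Fintype (𝓞 K ⧸ Q)] (a : ι → 𝓞 K)
    {e : ι → Ideal (𝓞 K) → ℕ} (he : ∀ k q, e k q ≤ γ) {w : 𝓞 K ⧸ Q → ℝ} (hw : Good Q γ S w) :
    ∃ w', Good Q γ (insert p S) w' ∧
      mean (fun x => w' x * ind (cov Q T a e (insert p S)) x) ≤
        mean (fun x => w x * ind (cov Q T a e S) x) +
        ∑ k ∈ supp T e (insert p S) \ supp T e S, ∑ l ∈ supp T e (insert p S) \ supp T e S,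
          ((Ideal.absNorm p : ℝ) ^ e k p)⁻¹ * ((Ideal.absNorm p : ℝ) ^ e l p)⁻¹ *
            ∏ q ∈ S, loc (Ideal.absNorm q) (max (e k q) (e l q)) := by
  have hST : S ⊆ T := (Finset.subset_insert p S).trans hS
  have hQf : ∀ {S' : Finset (Ideal (𝓞 K))} {f : Ideal (𝓞 K) → ℕ}, S' ⊆ T → (∀ q, f q ≤ γ) →
      Q ≤ idealOf S' f := fun hS' hf => by
    rw [hQ]; exact (idealOf_subset hS' _).trans (idealOf_anti _ fun q _ => hf q)
  set New := supp T e (insert p S) \ supp T e S with hNew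
  set H := sub Q (idealOf S fun _ => γ) with hH
  set H' := sub Q (idealOf (insert p S) fun _ => γ) with hH'
  have hH'H : H' ≤ H := sub_mono (idealOf_subset (Finset.subset_insert p S) _)
  have hsupp : ∀ {S' : Finset (Ideal (𝓞 K))} {k : ι}, S' ⊆ T → k ∈ supp T e S' →
      idealOf T (e k) = idealOf S' (e k) := fun hS' hk =>
    idealOf_congr hS' (by simpa [supp] using hk)
  -- the classes that appear for the first time
  set B : Set (𝓞 K ⧸ Q) := {z | ∃ k ∈ New, z ∈ cls Q (a k) (idealOf (insert p S) (e k))} with hB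
  have hBinv : CosetInv H' (ind B) := by
    intro x h hh
    have : x + h ∈ B ↔ x ∈ B := by
      change (∃ k ∈ New, _) ↔ (∃ k ∈ New, _)
      refine exists_congr fun k => and_congr_right fun _ => ?_
      exact mem_cls_add (sub_mono (idealOf_anti _ fun q _ => he k q)) (a k) x hh
    exact ind_congr this
  have hCinv : CosetInv H (ind (cov Q T a e S)) := by
    intro x h hh
    have : x + h ∈ cov Q T a e S ↔ x ∈ cov Q T a e S := by
      change (∃ k ∈ supp T e S, _) ↔ (∃ k ∈ supp T e S, _)
      refine exists_congr fun k => and_congr_right fun hk => ?_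
      rw [hsupp hST hk]
      exact mem_cls_add (sub_mono (idealOf_anti _ fun q _ => he k q)) (a k) x hh
    exact ind_congr this
  obtain ⟨w', hw'0, hw'I, hw'2, hw'E, hw'B⟩ := distort H H' hH'H hw.nonneg hw.inv B hBinv
  refine ⟨w', ⟨hw'0, hw'I, ?_, ?_⟩, ?_⟩
  · have := hw'E (fun _ => 1) (fun _ _ _ => rfl)
    simp only [mul_one] at this
    rw [← hw.mean_eq]
    exact this
  · intro c f hf
    rw [Finset.prod_insert hp]
    by_cases hfp : f p = 0
    · have h1 : idealOf (insert p S) f = idealOf S f := by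
        rw [idealOf_insert, hfp]; simp
      rw [h1, hw'E _ (cosetInv_cls (sub_mono (idealOf_anti _ fun q _ => hf q)) c)]
      simpa [loc, hfp] using hw.le c f hf
    · have h1 : mean (fun x => w' x * ind (cls Q c (idealOf (insert p S) f)) x) ≤
          2 * mean (fun x => w x * ind (cls Q c (idealOf (insert p S) f)) x) := by
        rw [← mean_const_mul]
        refine mean_mono fun x => ?_
        rw [← mul_assoc]
        exact mul_le_mul_of_nonneg_right (hw'2 x) (ind_nonneg _ _)
      have h2 : mean (fun x => w x * ind (cls Q c (idealOf (insert p S) f)) x) ≤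
          ((Ideal.absNorm p : ℝ) ^ f p)⁻¹ * mean (fun x => w x * ind (cls Q c (idealOf S f)) x) := by
        rw [← mean_mul_avg H hw.inv, ← mean_const_mul]
        refine mean_mono fun x => ?_
        rw [mul_left_comm]
        exact mul_le_mul_of_nonneg_left (avg_cls_le hT hS hp hQ hf c x) (hw.nonneg x)
      have h3 := hw.le c f hf
      have h4 : 0 ≤ ((Ideal.absNorm p : ℝ) ^ f p)⁻¹ := by positivity
      have h5 := mul_le_mul_of_nonneg_left h3 h4
      simp only [loc, hfp, if_false]
      simp only [loc] at h5
      linarith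
  · have h1 : mean (fun x => w' x * ind (cov Q T a e (insert p S)) x) ≤
        mean (fun x => w' x * ind (cov Q T a e S) x) + mean (fun x => w' x * ind B x) := by
      rw [← mean_add]
      refine mean_mono fun x => ?_
      rw [← mul_add]
      refine mul_le_mul_of_nonneg_left ?_ (hw'0 x)
      by_cases hx : x ∈ cov Q T a e (insert p S)
      · obtain ⟨k, hk, hxk⟩ := hx
        by_cases hkS : k ∈ supp T e S
        · have : x ∈ cov Q T a e S := ⟨k, hkS, hxk⟩
          have h2 : ind (cov Q T a e S) x = 1 := by simp [ind, this]
          linarith [ind_le_one (cov Q T a e (insert p S)) x, ind_nonneg B x]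
        · have : x ∈ B := by
            refine ⟨k, Finset.mem_sdiff.mpr ⟨hk, hkS⟩, ?_⟩
            rw [← hsupp hS hk]
            exact hxk
          have h2 : ind B x = 1 := by simp [ind, this]
          linarith [ind_le_one (cov Q T a e (insert p S)) x, ind_nonneg (cov Q T a e S) x]
      · have h2 : ind (cov Q T a e (insert p S)) x = 0 := by simp [ind, hx]
        linarith [ind_nonneg B x, ind_nonneg (cov Q T a e S) x]
    rw [hw'E _ hCinv] at h1
    refine h1.trans (add_le_add le_rfl (hw'B.trans ?_))
    have h2 : ∀ x, avg H (ind B) x ≤ ∑ k ∈ New,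
        ((Ideal.absNorm p : ℝ) ^ e k p)⁻¹ * ind (cls Q (a k) (idealOf S (e k))) x := by
      intro x
      have h3 : ∀ z, ind B z ≤ ∑ k ∈ New, ind (cls Q (a k) (idealOf (insert p S) (e k))) z := by
        intro z
        by_cases hz : z ∈ B
        · obtain ⟨k, hk, hzk⟩ := hz
          have h4 : ind (cls Q (a k) (idealOf (insert p S) (e k))) z = 1 := by simp [ind, hzk]
          refine (ind_le_one B z).trans (h4.symm.le.trans ?_)
          exact Finset.single_le_sum
            (f := fun k => ind (cls Q (a k) (idealOf (insert p S) (e k))) z)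
            (fun k _ => ind_nonneg _ _) hk
        · have h4 : ind B z = 0 := by simp [ind, hz]
          rw [h4]
          exact Finset.sum_nonneg fun k _ => ind_nonneg _ _
      refine (avg_mono H h3 x).trans ?_
      rw [avg_sum]
      exact Finset.sum_le_sum fun k _ => avg_cls_le hT hS hp hQ (he k) (a k) x
    calc mean (fun x => w x * (avg H (ind B) x) ^ 2)
        ≤ mean (fun x => ∑ k ∈ New, ∑ l ∈ New,
            ((Ideal.absNorm p : ℝ) ^ e k p)⁻¹ * ((Ideal.absNorm p : ℝ) ^ e l p)⁻¹ *
            (w x * (ind (cls Q (a k) (idealOf S (e k))) x *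
              ind (cls Q (a l) (idealOf S (e l))) x))) := by
          refine mean_mono fun x => ?_
          have h3 := pow_le_pow_left₀ (avg_nonneg H (ind_nonneg B) x) (h2 x) 2
          refine (mul_le_mul_of_nonneg_left h3 (hw.nonneg x)).trans (le_of_eq ?_)
          rw [pow_two, Finset.sum_mul_sum, Finset.mul_sum]
          refine Finset.sum_congr rfl fun k _ => ?_
          rw [Finset.mul_sum]
          refine Finset.sum_congr rfl fun l _ => ?_
          ring
      _ = ∑ k ∈ New, ∑ l ∈ New,
            ((Ideal.absNorm p : ℝ) ^ e k p)⁻¹ * ((Ideal.absNorm p : ℝ) ^ e l p)⁻¹ *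
            mean (fun x => w x * (ind (cls Q (a k) (idealOf S (e k))) x *
              ind (cls Q (a l) (idealOf S (e l))) x)) := by
          rw [mean_sum]
          refine Finset.sum_congr rfl fun k _ => ?_
          rw [mean_sum]
          refine Finset.sum_congr rfl fun l _ => ?_
          rw [mean_const_mul]
      _ ≤ _ := by
          refine Finset.sum_le_sum fun k _ => Finset.sum_le_sum fun l _ => ?_
          refine mul_le_mul_of_nonneg_left ?_ (by positivity)
          obtain ⟨c, hc⟩ := ind_cls_mul_le (hQf hST (he k)) (hQf hST (he l)) (a k) (a l)
          refine le_trans (mean_mono fun x => mul_le_mul_of_nonneg_left (hc x) (hw.nonneg x)) ?_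
          exact hw.le c _ fun q => max_le (he k q) (he l q)

/-- A sum over indices of a product of local factors is at most the Euler product, times the
largest number `c` of indices sharing the same local data. -/
lemma sum_prod_le {κ X I : Type*} (A : Finset κ) (S : Finset I) (v : κ → I → X) (D : I → Finset X)
    (h : I → X → ℝ) (hh : ∀ i x, 0 ≤ h i x) (hD : ∀ k ∈ A, ∀ i ∈ S, v k i ∈ D i) (c : ℕ)
    (hc : ∀ k ∈ A, (A.filter fun l => ∀ i ∈ S, v l i = v k i).card ≤ c) :
    ∑ k ∈ A, ∏ i ∈ S, h i (v k i) ≤ c * ∏ i ∈ S, ∑ x ∈ D i, h i x := by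
  set r : κ → (S → X) := fun k i => v k i with hr
  have h1 : ∑ k ∈ A, ∏ i ∈ S, h i (v k i) =
      ∑ k ∈ A, (fun u : S → X => ∏ i : S, h i (u i)) (r k) := by
    refine Finset.sum_congr rfl fun k _ => ?_
    exact (Finset.prod_coe_sort S (fun i => h i (v k i))).symm
  have h2 : ∏ i ∈ S, ∑ x ∈ D i, h i x =
      ∑ u ∈ Fintype.piFinset (fun i : S => D i), ∏ i : S, h i (u i) := by
    rw [← Finset.prod_coe_sort S (fun i => ∑ x ∈ D i, h i x), Finset.prod_univ_sum]
  rw [h1, Finset.sum_comp (fun u : S → X => ∏ i : S, h i (u i)) r, h2, Finset.mul_sum]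
  have hsub : A.image r ⊆ Fintype.piFinset (fun i : S => D i) := by
    intro u hu
    obtain ⟨k, hk, rfl⟩ := Finset.mem_image.mp hu
    exact Fintype.mem_piFinset.mpr fun i => hD k hk i i.2
  have hnn : ∀ u : S → X, 0 ≤ ∏ i : S, h i (u i) := fun u => Finset.prod_nonneg fun i _ => hh i _
  refine le_trans (Finset.sum_le_sum fun u hu => ?_)
    (Finset.sum_le_sum_of_subset_of_nonneg hsub fun u _ _ => mul_nonneg c.cast_nonneg (hnn u))
  rw [nsmul_eq_mul]
  refine mul_le_mul_of_nonneg_right ?_ (hnn u)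
  obtain ⟨k, hk, rfl⟩ := Finset.mem_image.mp hu
  refine le_trans ?_ (Nat.cast_le.mpr (hc k hk))
  norm_cast
  refine Finset.card_le_card fun l hl => ?_
  rw [Finset.mem_filter] at hl ⊢
  exact ⟨hl.1, fun i hi => congrFun hl.2 ⟨i, hi⟩⟩

end Distortion

/-! ### Bounding the mass of the covered set -/

section Core

set_option linter.unusedSectionVars false

variable {K : Type*} [Field K] [NumberField K] {ι : Type*} [Fintype ι]

lemma geom_le {t b : ℝ} (h0 : 0 ≤ t) (h1 : t < 1) (hb : (1 - t)⁻¹ ≤ b) (n : ℕ) :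
    ∑ j ∈ Finset.range n, t ^ j ≤ b := by
  refine le_trans ?_ hb
  rw [← tsum_geometric_of_lt_one h0 h1]
  exact (summable_geometric_of_lt_one h0 h1).sum_le_tsum _ fun j _ => pow_nonneg h0 j

lemma inv_pow_le {N : ℝ} (hN : 2 ≤ N) {m : ℕ} (hm : m ≠ 0) :
    (N ^ m)⁻¹ ≤ 2 / N * (1 / 2) ^ m := by
  obtain ⟨j, rfl⟩ := Nat.exists_eq_succ_of_ne_zero hm
  have h2 : (2 : ℝ) ^ j ≤ N ^ j := pow_le_pow_left₀ (by norm_num) hN j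
  rw [Nat.succ_eq_add_one, pow_succ, pow_succ, one_div, inv_pow, mul_inv]
  have h3 : (N ^ j)⁻¹ ≤ (2 ^ j)⁻¹ := inv_anti₀ (by positivity) h2
  have h4 : 0 < N := by linarith
  calc (N ^ j)⁻¹ * N⁻¹ ≤ (2 ^ j)⁻¹ * N⁻¹ := by gcongr
    _ = _ := by field_simp

/-- The Euler factor of the second moment at a prime of norm `N` that has been processed. -/
lemma local_pair {N : ℝ} (hN : 2 ≤ N) (n : ℕ) :
    ∑ x ∈ Finset.range n ×ˢ Finset.range n, loc N (max x.1 x.2) ≤ Real.exp (64 / N) := by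
  have hN0 : 0 < N := by linarith
  have h1 : ∀ x : ℕ × ℕ, loc N (max x.1 x.2) ≤
      (if x = (0, 0) then 1 else 0) + 4 / N * ((3 / 4) ^ x.1 * (3 / 4) ^ x.2) := by
    rintro ⟨i, j⟩
    by_cases h : max i j = 0
    · have hi : i = 0 := by omega
      have hj : j = 0 := by omega
      subst hi; subst hj
      have : 0 ≤ 4 / N := by positivity
      simp [loc, this]
    · have hne : (i, j) ≠ (0, 0) := by
        intro h'
        simp only [Prod.mk.injEq] at h'
        omega
      simp only [loc, h, hne, if_false, zero_add]
      have h2 := inv_pow_le hN h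
      have h3 : (1 / 2 : ℝ) ^ (max i j) ≤ (3 / 4) ^ i * (3 / 4) ^ j := by
        rw [← pow_add]
        calc (1 / 2 : ℝ) ^ (max i j) ≤ ((3 / 4) ^ 2) ^ (max i j) := by
              gcongr; norm_num
          _ = (3 / 4) ^ (2 * max i j) := by rw [pow_mul]
          _ ≤ _ := pow_le_pow_of_le_one (by norm_num) (by norm_num) (by omega)
      calc 2 * (N ^ max i j)⁻¹ ≤ 2 * (2 / N * (1 / 2) ^ max i j) := by gcongr
        _ ≤ 2 * (2 / N * ((3 / 4) ^ i * (3 / 4) ^ j)) := by gcongr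
        _ = _ := by ring
  refine (Finset.sum_le_sum fun x _ => h1 x).trans ?_
  have h3 : ∑ x ∈ Finset.range n ×ˢ Finset.range n, (3 / 4 : ℝ) ^ x.1 * (3 / 4) ^ x.2 =
      (∑ j ∈ Finset.range n, (3 / 4) ^ j) * ∑ j ∈ Finset.range n, (3 / 4) ^ j := by
    rw [Finset.sum_mul_sum, Finset.sum_product]
  rw [Finset.sum_add_distrib, ← Finset.mul_sum, h3]
  have h4 := geom_le (t := 3 / 4) (b := 4) (by norm_num) (by norm_num) (by norm_num) n
  have h5 : 0 ≤ ∑ j ∈ Finset.range n, (3 / 4 : ℝ) ^ j := Finset.sum_nonneg fun _ _ => by positivity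
  have h6 : ∑ x ∈ Finset.range n ×ˢ Finset.range n,
      (if x = ((0, 0) : ℕ × ℕ) then (1 : ℝ) else 0) ≤ 1 := by
    rw [Finset.sum_ite_eq']
    split_ifs <;> norm_num
  have h7 := Real.add_one_le_exp (64 / N)
  have h8 : (∑ j ∈ Finset.range n, (3 / 4 : ℝ) ^ j) * (∑ j ∈ Finset.range n, (3 / 4 : ℝ) ^ j)
      ≤ 4 * 4 := mul_le_mul h4 h4 h5 (by norm_num)
  have h9 : 4 / N * ((∑ j ∈ Finset.range n, (3 / 4 : ℝ) ^ j) *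
      (∑ j ∈ Finset.range n, (3 / 4 : ℝ) ^ j)) ≤ 4 / N * (4 * 4) :=
    mul_le_mul_of_nonneg_left h8 (by positivity)
  have h10 : 4 / N * (4 * 4) = 64 / N := by ring
  linarith

/-- The Euler factor of the second moment at the prime being processed. -/
lemma local_top {N : ℝ} (hN : 2 ≤ N) (n : ℕ) :
    ∑ x ∈ Finset.range n ×ˢ Finset.range n,
      (if x.1 = 0 then 0 else (N ^ x.1)⁻¹) * (if x.2 = 0 then 0 else (N ^ x.2)⁻¹) ≤
      16 / N ^ 2 := by
  have hN0 : 0 < N := by linarith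
  rw [Finset.sum_product]
  obtain ⟨u, hu⟩ : ∃ u : ℕ → ℝ, u = fun j => if j = 0 then 0 else (N ^ j)⁻¹ := ⟨_, rfl⟩
  have hprod : ∑ x ∈ Finset.range n, ∑ y ∈ Finset.range n,
      (if x = 0 then 0 else (N ^ x)⁻¹) * (if y = 0 then 0 else (N ^ y)⁻¹) =
      (∑ j ∈ Finset.range n, u j) * ∑ j ∈ Finset.range n, u j := by
    rw [Finset.sum_mul_sum, hu]
  refine hprod.le.trans ?_
  rw [hu]
  set A := ∑ j ∈ Finset.range n, (if j = 0 then 0 else (N ^ j)⁻¹) with hA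
  have h0 : 0 ≤ A := Finset.sum_nonneg fun j _ => by split_ifs <;> positivity
  have h1 : A ≤ 4 / N := by
    have : A ≤ ∑ j ∈ Finset.range n, 2 / N * (1 / 2) ^ j := by
      refine Finset.sum_le_sum fun j _ => ?_
      split_ifs with h
      · positivity
      · exact inv_pow_le hN h
    refine this.trans ?_
    rw [← Finset.mul_sum]
    have h4 := geom_le (t := 1 / 2) (b := 2) (by norm_num) (by norm_num) (by norm_num) n
    calc 2 / N * ∑ j ∈ Finset.range n, (1 / 2) ^ j ≤ 2 / N * 2 := by gcongr
      _ = 4 / N := by ring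
  calc A * A ≤ 4 / N * (4 / N) := mul_le_mul h1 h1 h0 (by positivity)
    _ = _ := by field_simp; norm_num

lemma two_le_absNorm {q : Ideal (𝓞 K)} (hq : Prime q) : (2 : ℝ) ≤ Ideal.absNorm q := by
  have h0 : Ideal.absNorm q ≠ 0 := by
    rw [Ne, Ideal.absNorm_eq_zero_iff]
    exact hq.ne_zero
  have h1 : Ideal.absNorm q ≠ 1 := by
    rw [Ne, Ideal.absNorm_eq_one_iff, ← Ideal.isUnit_iff]
    exact hq.not_isUnit
  have : 2 ≤ Ideal.absNorm q := by omega
  exact_mod_cast this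

/-- Moduli supported on `S` that agree on `S` coincide, so at most `s` indices share them. -/
lemma card_fiber_le {T S : Finset (Ideal (𝓞 K))} {e : ι → Ideal (𝓞 K) → ℕ} {s : ℕ}
    (hs : ∀ k, (Finset.univ.filter fun l => ∀ q ∈ T, e l q = e k q).card ≤ s)
    (A : Finset ι) (hA : A ⊆ supp T e S) {k : ι} (hk : k ∈ A) :
    (A.filter fun l => ∀ q ∈ S, e l q = e k q).card ≤ s := by
  refine le_trans (Finset.card_le_card fun l hl => ?_) (hs k)
  rw [Finset.mem_filter] at hl
  have hk' := hA hk
  have hl' := hA hl.1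
  simp only [supp, Finset.mem_filter, Finset.mem_univ, true_and] at hk' hl' ⊢
  intro q hq
  by_cases hqS : q ∈ S
  · exact hl.2 q hqS
  · rw [hk' q hq hqS, hl' q hq hqS]

/-- The second moment at `p` is bounded by its Euler product; the factor `s ^ 2` accounts for the
pairs of classes with the same pair of moduli. -/
lemma second_moment_le {T S : Finset (Ideal (𝓞 K))} {p : Ideal (𝓞 K)} (hT : ∀ q ∈ T, Prime q)
    (hS : insert p S ⊆ T) (hp : p ∉ S) {γ : ℕ} {e : ι → Ideal (𝓞 K) → ℕ}
    (he : ∀ k q, e k q ≤ γ) {s : ℕ}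
    (hs : ∀ k, (Finset.univ.filter fun l => ∀ q ∈ T, e l q = e k q).card ≤ s) :
    ∑ k ∈ supp T e (insert p S) \ supp T e S, ∑ l ∈ supp T e (insert p S) \ supp T e S,
          ((Ideal.absNorm p : ℝ) ^ e k p)⁻¹ * ((Ideal.absNorm p : ℝ) ^ e l p)⁻¹ *
            ∏ q ∈ S, loc (Ideal.absNorm q) (max (e k q) (e l q)) ≤
      (s : ℝ) ^ 2 * (16 / (Ideal.absNorm p : ℝ) ^ 2 *
        Real.exp (64 * ∑ q ∈ S, (Ideal.absNorm q : ℝ)⁻¹)) := by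
  set New := supp T e (insert p S) \ supp T e S with hNew
  have hNs : New ⊆ supp T e (insert p S) := Finset.sdiff_subset
  have hpos : ∀ k ∈ New, e k p ≠ 0 := by
    intro k hk hkp
    obtain ⟨h1, h2⟩ := Finset.mem_sdiff.mp hk
    apply h2
    simp only [supp, Finset.mem_filter, Finset.mem_univ, true_and] at h1 ⊢
    intro q hq hqS
    by_cases hqp : q = p
    · rw [hqp, hkp]
    · exact h1 q hq (by simp [hqp, hqS])
  set h : Ideal (𝓞 K) → ℕ × ℕ → ℝ := fun q x =>
    if q = p then (if x.1 = 0 then 0 else ((Ideal.absNorm p : ℝ) ^ x.1)⁻¹) *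
      (if x.2 = 0 then 0 else ((Ideal.absNorm p : ℝ) ^ x.2)⁻¹)
    else loc (Ideal.absNorm q) (max x.1 x.2) with hh
  have hh0 : ∀ q x, 0 ≤ h q x := by
    intro q x
    simp only [hh]
    split_ifs <;> first | positivity | exact loc_nonneg _ _
  have hne : ∀ q ∈ S, q ≠ p := fun q hq h => hp (h ▸ hq)
  have key := sum_prod_le (New ×ˢ New) (insert p S) (fun x q => (e x.1 q, e x.2 q))
    (fun _ => Finset.range (γ + 1) ×ˢ Finset.range (γ + 1)) h hh0
    (fun x _ q _ => by
      simp only [Finset.mem_product, Finset.mem_range]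
      exact ⟨Nat.lt_succ_of_le (he _ _), Nat.lt_succ_of_le (he _ _)⟩) (s ^ 2) (by
      rintro ⟨k, l⟩ hkl
      obtain ⟨hk, hl⟩ := Finset.mem_product.mp hkl
      have h1 := card_fiber_le hs New hNs hk
      have h2 := card_fiber_le hs New hNs hl
      refine le_trans (Finset.card_le_card (t := (New.filter fun l' => ∀ q ∈ insert p S,
        e l' q = e k q) ×ˢ (New.filter fun l' => ∀ q ∈ insert p S, e l' q = e l q)) ?_) ?_
      · rintro ⟨k', l'⟩ hx
        simp only [Finset.mem_filter, Finset.mem_product, Prod.mk.injEq] at hx ⊢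
        exact ⟨⟨hx.1.1, fun q hq => (hx.2 q hq).1⟩, ⟨hx.1.2, fun q hq => (hx.2 q hq).2⟩⟩
      · rw [Finset.card_product, pow_two]
        exact Nat.mul_le_mul h1 h2)
  rw [← Finset.sum_product']
  have hleft : ∑ x ∈ New ×ˢ New,
      ((Ideal.absNorm p : ℝ) ^ e x.1 p)⁻¹ * ((Ideal.absNorm p : ℝ) ^ e x.2 p)⁻¹ *
            ∏ q ∈ S, loc (Ideal.absNorm q) (max (e x.1 q) (e x.2 q)) =
      ∑ x ∈ New ×ˢ New, ∏ q ∈ insert p S, h q (e x.1 q, e x.2 q) := by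
    refine Finset.sum_congr rfl fun x hx => ?_
    obtain ⟨hk, hl⟩ := Finset.mem_product.mp hx
    rw [Finset.prod_insert hp]
    congr 1
    · simp [hh, hpos _ hk, hpos _ hl]
    · refine Finset.prod_congr rfl fun q hq => ?_
      simp [hh, hne q hq]
  rw [hleft]
  refine key.trans ?_
  push_cast
  refine mul_le_mul_of_nonneg_left ?_ (by positivity)
  rw [Finset.prod_insert hp]
  have hpT := hT p (hS (Finset.mem_insert_self p S))
  have h1 : ∑ x ∈ Finset.range (γ + 1) ×ˢ Finset.range (γ + 1), h p x ≤
      16 / (Ideal.absNorm p : ℝ) ^ 2 := by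
    have := local_top (two_le_absNorm hpT) (γ + 1)
    simpa [hh] using this
  have h2 : ∏ q ∈ S, ∑ x ∈ Finset.range (γ + 1) ×ˢ Finset.range (γ + 1), h q x ≤
      Real.exp (64 * ∑ q ∈ S, (Ideal.absNorm q : ℝ)⁻¹) := by
    rw [Finset.mul_sum, Real.exp_sum]
    refine Finset.prod_le_prod (fun q _ => Finset.sum_nonneg fun x _ => hh0 q x) fun q hq => ?_
    have := local_pair (two_le_absNorm (hT q (hS (Finset.mem_insert_of_mem hq)))) (γ + 1)
    rw [div_eq_mul_inv] at this
    simpa [hh, hne q hq] using this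
  exact mul_le_mul h1 h2 (Finset.prod_nonneg fun q _ => Finset.sum_nonneg fun x _ => hh0 q x)
    (by positivity)

/-- If residue classes with moduli `idealOf T (e k)`, each modulus used at most `s` times, cover
`𝓞 K`, then the density of the classes with `y`-smooth moduli and the second moments of the primes
of norm larger than `y` add up to at least `1`. -/
theorem one_le_of_cover {T : Finset (Ideal (𝓞 K))} (hT : ∀ q ∈ T, Prime q) {γ : ℕ} (a : ι → 𝓞 K)
    {e : ι → Ideal (𝓞 K) → ℕ} (he : ∀ k q, e k q ≤ γ) {s : ℕ}
    (hs : ∀ k, (Finset.univ.filter fun l => ∀ q ∈ T, e l q = e k q).card ≤ s)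
    (hcov : ∀ x : 𝓞 K, ∃ k, x - a k ∈ idealOf T (e k)) (y : ℝ) :
    1 ≤ ∑ k ∈ supp T e (T.filter fun q => (Ideal.absNorm q : ℝ) ≤ y),
          (Ideal.absNorm (idealOf T (e k)) : ℝ)⁻¹ +
        ∑ p ∈ T.filter (fun q => ¬ (Ideal.absNorm q : ℝ) ≤ y),
          (s : ℝ) ^ 2 * (16 / (Ideal.absNorm p : ℝ) ^ 2 *
            Real.exp (64 * ∑ q ∈ T.filter (fun q => Ideal.absNorm q ≤ Ideal.absNorm p),
              (Ideal.absNorm q : ℝ)⁻¹)) := by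
  set S₀ := T.filter fun q => (Ideal.absNorm q : ℝ) ≤ y with hS₀
  set L := T.filter fun q => ¬ (Ideal.absNorm q : ℝ) ≤ y with hL
  obtain ⟨Q, hQ⟩ : ∃ Q, Q = idealOf T fun _ => γ := ⟨_, rfl⟩
  have hfin : Finite (𝓞 K ⧸ Q) := by
    rw [← Ideal.absNorm_ne_zero_iff]
    have h1 := absNorm_idealOf hT (fun _ => γ)
    rw [← hQ] at h1
    have h2 : (Ideal.absNorm Q : ℝ) ≠ 0 := by
      rw [h1]
      refine Finset.prod_ne_zero_iff.mpr fun q hq => pow_ne_zero _ ?_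
      have := two_le_absNorm (hT q hq)
      linarith
    exact_mod_cast h2
  let _ : Fintype (𝓞 K ⧸ Q) := Fintype.ofFinite _
  have hS₀T : S₀ ⊆ T := Finset.filter_subset _ _
  have hQk : ∀ k, Q ≤ idealOf T (e k) := fun k => by
    rw [hQ]; exact idealOf_anti _ fun q _ => he k q
  set F : Ideal (𝓞 K) → ℝ := fun p => (s : ℝ) ^ 2 * (16 / (Ideal.absNorm p : ℝ) ^ 2 *
            Real.exp (64 * ∑ q ∈ T.filter (fun q => Ideal.absNorm q ≤ Ideal.absNorm p),
              (Ideal.absNorm q : ℝ)⁻¹)) with hF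
  have hbase : mean (fun x => (1 : ℝ) * ind (cov Q T a e S₀) x) ≤
      ∑ k ∈ supp T e S₀, (Ideal.absNorm (idealOf T (e k)) : ℝ)⁻¹ := by
    have h1 : ∀ x, 1 * ind (cov Q T a e S₀) x ≤
        ∑ k ∈ supp T e S₀, ind (cls Q (a k) (idealOf T (e k))) x := by
      intro x
      rw [one_mul]
      by_cases hx : x ∈ cov Q T a e S₀
      · obtain ⟨k, hk, hxk⟩ := hx
        have h4 : ind (cls Q (a k) (idealOf T (e k))) x = 1 := by simp [ind, hxk]
        refine (ind_le_one _ x).trans (h4.symm.le.trans ?_)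
        exact Finset.single_le_sum (f := fun k => ind (cls Q (a k) (idealOf T (e k))) x)
            (fun k _ => ind_nonneg _ _) hk
      · have h4 : ind (cov Q T a e S₀) x = 0 := by simp [ind, hx]
        rw [h4]
        exact Finset.sum_nonneg fun k _ => ind_nonneg _ _
    refine (mean_mono h1).trans (le_of_eq ?_)
    rw [mean_sum]
    exact Finset.sum_congr rfl fun k _ => mean_cls (hQk k) (a k)
  have main : ∀ L' ⊆ L, ∃ w, Good Q γ (S₀ ∪ L') w ∧
      mean (fun x => w x * ind (cov Q T a e (S₀ ∪ L')) x) ≤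
        ∑ k ∈ supp T e S₀, (Ideal.absNorm (idealOf T (e k)) : ℝ)⁻¹ + ∑ p ∈ L', F p := by
    intro L'
    refine Finset.induction_on_max_value
      (motive := fun L' => L' ⊆ L → ∃ w, Good Q γ (S₀ ∪ L') w ∧
        mean (fun x => w x * ind (cov Q T a e (S₀ ∪ L')) x) ≤
          ∑ k ∈ supp T e S₀, (Ideal.absNorm (idealOf T (e k)) : ℝ)⁻¹ + ∑ p ∈ L', F p)
      (fun q : Ideal (𝓞 K) => Ideal.absNorm q) L' ?_ ?_
    · intro _
      refine ⟨fun _ => 1, ?_, ?_⟩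
      · rw [Finset.union_empty]
        exact good_one hT hS₀T hQ
      · rw [Finset.union_empty, Finset.sum_empty, add_zero]
        exact hbase
    · intro p L' hpL' hmax ih hsub
      obtain ⟨w, hw, hwB⟩ := ih ((Finset.subset_insert _ _).trans hsub)
      have hpL : p ∈ L := hsub (Finset.mem_insert_self _ _)
      have hpy := (Finset.mem_filter.mp hpL).2
      have hLT : L ⊆ T := Finset.filter_subset _ _
      have hST : S₀ ∪ L' ⊆ T := Finset.union_subset hS₀T
        (((Finset.subset_insert _ _).trans hsub).trans hLT)
      have hpS : p ∉ S₀ ∪ L' := by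
        intro hmem
        rcases Finset.mem_union.mp hmem with h | h
        · exact hpy (Finset.mem_filter.mp h).2
        · exact hpL' h
      have hins : insert p (S₀ ∪ L') ⊆ T := Finset.insert_subset (hLT hpL) hST
      obtain ⟨w', hw', hw'B⟩ := good_step hT hins hpS hQ a he hw
      refine ⟨w', ?_, ?_⟩
      · rw [Finset.union_insert]; exact hw'
      · rw [Finset.union_insert, Finset.sum_insert hpL']
        have h1 := second_moment_le hT hins hpS he hs
        have h2 : (s : ℝ) ^ 2 * (16 / (Ideal.absNorm p : ℝ) ^ 2 *
            Real.exp (64 * ∑ q ∈ S₀ ∪ L', (Ideal.absNorm q : ℝ)⁻¹)) ≤ F p := by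
          simp only [hF]
          gcongr
          intro q hq
          refine Finset.mem_filter.mpr ⟨hST hq, ?_⟩
          rcases Finset.mem_union.mp hq with h | h
          · have h3 := (Finset.mem_filter.mp h).2
            have h4 : (Ideal.absNorm q : ℝ) ≤ Ideal.absNorm p := by linarith
            exact_mod_cast h4
          · exact hmax q h
        linarith
  obtain ⟨w, hw, hwB⟩ := main L subset_rfl
  refine le_trans (le_of_eq ?_) hwB
  rw [← hw.mean_eq]
  congr 1
  funext x
  have hx : x ∈ cov Q T a e (S₀ ∪ L) := by
    obtain ⟨r, rfl⟩ := Ideal.Quotient.mk_surjective x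
    obtain ⟨k, hk⟩ := hcov r
    refine ⟨k, ?_, ?_⟩
    · simp only [supp, Finset.mem_filter, Finset.mem_univ, true_and]
      intro q hq hq'
      rw [hS₀, hL, Finset.filter_union_filter_not_eq] at hq'
      exact absurd hq hq'
    · change _ - _ ∈ sub Q _
      rw [← map_sub, mk_mem_sub (hQk k)]
      exact hk
  simp [ind, hx]

end Core

/-! ### Sums over prime ideals -/

section PrimeSums

variable {K : Type*} [Field K] [NumberField K]

/-- The residue characteristic of a nonzero prime ideal. -/
noncomputable def resChar (q : Ideal (𝓞 K)) : ℕ := Ideal.absNorm (Ideal.under ℤ q)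

lemma resChar_prime {q : Ideal (𝓞 K)} (hq : Prime q) : (resChar q).Prime := by
  have h1 : q.IsPrime := Ideal.isPrime_of_prime hq
  have h2 : NeZero q := ⟨hq.ne_zero⟩
  exact Nat.absNorm_under_prime q

lemma resChar_le {q : Ideal (𝓞 K)} (hq : Prime q) : resChar q ≤ Ideal.absNorm q := by
  refine Nat.le_of_dvd ?_ (Int.absNorm_under_dvd_absNorm q)
  have := two_le_absNorm hq
  have h : (0 : ℝ) < Ideal.absNorm q := by linarith
  exact_mod_cast h

/-- At most `[K : ℚ]` prime ideals lie above a rational prime: their product divides `p`. -/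
lemma card_resChar_le {S : Finset (Ideal (𝓞 K))} (hS : ∀ q ∈ S, Prime q) (p : ℕ) :
    (S.filter fun q => resChar q = p).card ≤ Module.finrank ℤ (𝓞 K) := by
  set F := S.filter fun q => resChar q = p with hF
  rcases F.eq_empty_or_nonempty with h | ⟨q₀, hq₀⟩
  · simp [h]
  have hF' : ∀ q ∈ F, Prime q ∧ resChar q = p := fun q hq =>
    ⟨hS q (Finset.mem_filter.mp hq).1, (Finset.mem_filter.mp hq).2⟩
  have hp : p.Prime := (hF' q₀ hq₀).2 ▸ resChar_prime (hF' q₀ hq₀).1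
  have hdvd : ∏ q ∈ F, q ∣ Ideal.span {(p : 𝓞 K)} := by
    refine Finset.prod_primes_dvd _ (fun q hq => (hF' q hq).1) fun q hq => ?_
    rw [Ideal.dvd_span_singleton, ← (hF' q hq).2]
    exact Int.absNorm_under_mem q
  have h1 : Ideal.absNorm (∏ q ∈ F, q) ∣ p ^ Module.finrank ℤ (𝓞 K) := by
    rw [← Ideal.absNorm_span_natCast]
    exact map_dvd Ideal.absNorm hdvd
  have h2 : p ^ F.card ≤ Ideal.absNorm (∏ q ∈ F, q) := by
    rw [map_prod, ← Finset.prod_const]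
    exact Finset.prod_le_prod' fun q hq => (hF' q hq).2 ▸ resChar_le (hF' q hq).1
  have h3 := h2.trans (Nat.le_of_dvd (pow_pos hp.pos _) h1)
  exact (Nat.pow_le_pow_iff_right hp.one_lt).mp h3

/-- A decreasing function summed over norms of prime ideals is compared with its sum over the
residue characteristics. -/
lemma sum_norm_le {S : Finset (Ideal (𝓞 K))} (hS : ∀ q ∈ S, Prime q) {g : ℕ → ℝ}
    (h0 : ∀ n, 0 ≤ g n) (hg : ∀ a b, 0 < a → a ≤ b → g b ≤ g a) :
    ∑ q ∈ S, g (Ideal.absNorm q) ≤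
      Module.finrank ℤ (𝓞 K) * ∑ p ∈ S.image resChar, g p := by
  calc ∑ q ∈ S, g (Ideal.absNorm q) ≤ ∑ q ∈ S, g (resChar q) :=
        Finset.sum_le_sum fun q hq =>
          hg _ _ (resChar_prime (hS q hq)).pos (resChar_le (hS q hq))
    _ = ∑ p ∈ S.image resChar, (S.filter fun q => resChar q = p).card • g p :=
        Finset.sum_comp g resChar
    _ ≤ _ := by
        rw [Finset.mul_sum]
        refine Finset.sum_le_sum fun p _ => ?_
        rw [nsmul_eq_mul]
        exact mul_le_mul_of_nonneg_right (Nat.cast_le.mpr (card_resChar_le hS p)) (h0 p)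

/-- A weak form of Mertens' theorem: squaring the sum of the reciprocals of the primes produces
a sum over products of two primes, bounded by twice the harmonic sum. -/
lemma sum_inv_prime_le {U : Finset ℕ} (hU : ∀ p ∈ U, p.Prime) {x : ℝ} (hx : 2 ≤ x)
    (hUx : ∀ p ∈ U, (p : ℝ) ≤ x) :
    ∑ p ∈ U, (p : ℝ)⁻¹ ≤ 3 * Real.sqrt (Real.log x) := by
  have hlog : Real.log 2 ≤ Real.log x := Real.log_le_log (by norm_num) hx
  have hlog2 := Real.log_two_gt_d9
  have hsq : (∑ p ∈ U, (p : ℝ)⁻¹) ^ 2 ≤ 9 * Real.log x := by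
    have h1 : (∑ p ∈ U, (p : ℝ)⁻¹) ^ 2 =
        ∑ z ∈ U ×ˢ U, (fun n : ℕ => (n : ℝ)⁻¹) ((fun z : ℕ × ℕ => z.1 * z.2) z) := by
      rw [pow_two, Finset.sum_mul_sum, Finset.sum_product]
      simp [mul_comm]
    have hfib : ∀ n ∈ (U ×ˢ U).image (fun z : ℕ × ℕ => z.1 * z.2),
        ((U ×ˢ U).filter fun z => z.1 * z.2 = n).card ≤ 2 := by
      intro n hn
      obtain ⟨⟨a, b⟩, hab, rfl⟩ := Finset.mem_image.mp hn
      obtain ⟨ha, hb⟩ := Finset.mem_product.mp hab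
      refine le_trans (Finset.card_le_card (t := {(a, b), (b, a)}) ?_) Finset.card_le_two
      rintro ⟨c, d⟩ hcd
      simp only [Finset.mem_filter, Finset.mem_product] at hcd
      obtain ⟨⟨hc, hd⟩, hcd⟩ := hcd
      simp only [Finset.mem_insert, Finset.mem_singleton, Prod.mk.injEq]
      have hca : c ∣ a * b := hcd ▸ dvd_mul_right c d
      have hc0 := (hU c hc).pos
      rcases ((hU c hc).dvd_mul).mp hca with h | h
      · have := (Nat.prime_dvd_prime_iff_eq (hU c hc) (hU a ha)).mp h
        subst this
        exact Or.inl ⟨rfl, Nat.eq_of_mul_eq_mul_left hc0 hcd⟩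
      · have := (Nat.prime_dvd_prime_iff_eq (hU c hc) (hU b hb)).mp h
        subst this
        exact Or.inr ⟨rfl, Nat.eq_of_mul_eq_mul_left hc0 (by rw [hcd, mul_comm])⟩
    have hsub : (U ×ˢ U).image (fun z : ℕ × ℕ => z.1 * z.2) ⊆ Finset.Icc 1 ⌊x ^ 2⌋₊ := by
      intro n hn
      obtain ⟨⟨a, b⟩, hab, rfl⟩ := Finset.mem_image.mp hn
      obtain ⟨ha, hb⟩ := Finset.mem_product.mp hab
      rw [Finset.mem_Icc]
      refine ⟨Nat.mul_pos (hU a ha).pos (hU b hb).pos, Nat.le_floor ?_⟩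
      push_cast
      rw [pow_two]
      exact mul_le_mul (hUx a ha) (hUx b hb) (by positivity) (by linarith)
    have hharm : ∑ n ∈ Finset.Icc 1 ⌊x ^ 2⌋₊, (n : ℝ)⁻¹ ≤ 1 + 2 * Real.log x := by
      have h2 := harmonic_floor_le_one_add_log (x ^ 2) (by nlinarith)
      rw [Real.log_pow, harmonic_eq_sum_Icc] at h2
      push_cast at h2
      exact h2
    rw [h1, Finset.sum_comp (fun n : ℕ => (n : ℝ)⁻¹) (fun z : ℕ × ℕ => z.1 * z.2)]
    refine le_trans (Finset.sum_le_sum (g := fun n : ℕ => 2 * (n : ℝ)⁻¹) fun n hn => ?_) ?_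
    · rw [nsmul_eq_mul]
      refine mul_le_mul_of_nonneg_right ?_ (by positivity)
      exact_mod_cast hfib n hn
    calc ∑ n ∈ (U ×ˢ U).image (fun z : ℕ × ℕ => z.1 * z.2), 2 * (n : ℝ)⁻¹
        ≤ ∑ n ∈ Finset.Icc 1 ⌊x ^ 2⌋₊, 2 * (n : ℝ)⁻¹ :=
          Finset.sum_le_sum_of_subset_of_nonneg hsub fun n _ _ => by positivity
      _ = 2 * ∑ n ∈ Finset.Icc 1 ⌊x ^ 2⌋₊, (n : ℝ)⁻¹ := by rw [Finset.mul_sum]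
      _ ≤ 9 * Real.log x := by linarith
  refine (Real.le_sqrt_of_sq_le hsq).trans ?_
  rw [Real.sqrt_mul (by norm_num), show (9 : ℝ) = 3 ^ 2 by norm_num, Real.sqrt_sq (by norm_num)]

lemma sum_inv_norm_le {S : Finset (Ideal (𝓞 K))} (hS : ∀ q ∈ S, Prime q) {x : ℝ} (hx : 2 ≤ x)
    (hSx : ∀ q ∈ S, (Ideal.absNorm q : ℝ) ≤ x) :
    ∑ q ∈ S, (Ideal.absNorm q : ℝ)⁻¹ ≤
      3 * Module.finrank ℤ (𝓞 K) * Real.sqrt (Real.log x) := by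
  have h1 := sum_norm_le hS (g := fun n => (n : ℝ)⁻¹) (fun n => by positivity)
    (fun a b ha hab => inv_anti₀ (by exact_mod_cast ha) (by exact_mod_cast hab))
  have h2 : ∑ p ∈ S.image resChar, (p : ℝ)⁻¹ ≤ 3 * Real.sqrt (Real.log x) := by
    refine sum_inv_prime_le ?_ hx ?_
    · intro p hp
      obtain ⟨q, hq, rfl⟩ := Finset.mem_image.mp hp
      exact resChar_prime (hS q hq)
    · intro p hp
      obtain ⟨q, hq, rfl⟩ := Finset.mem_image.mp hp
      exact le_trans (Nat.cast_le.mpr (resChar_le (hS q hq))) (hSx q hq)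
  refine h1.trans ((mul_le_mul_of_nonneg_left h2 (Nat.cast_nonneg _)).trans (le_of_eq ?_))
  ring

lemma sum_rpow_norm_le (K : Type*) [Field K] [NumberField K] :
    ∃ C : ℝ, 0 ≤ C ∧ ∀ S : Finset (Ideal (𝓞 K)), (∀ q ∈ S, Prime q) →
      ∑ q ∈ S, (Ideal.absNorm q : ℝ) ^ (-(5 / 4) : ℝ) ≤ C := by
  have hsum : Summable fun n : ℕ => (n : ℝ) ^ (-(5 / 4) : ℝ) :=
    Real.summable_nat_rpow.mpr (by norm_num)
  refine ⟨Module.finrank ℤ (𝓞 K) * ∑' n : ℕ, (n : ℝ) ^ (-(5 / 4) : ℝ),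
    mul_nonneg (Nat.cast_nonneg _) (tsum_nonneg fun n => by positivity), fun S hS => ?_⟩
  refine (sum_norm_le hS (g := fun n => (n : ℝ) ^ (-(5 / 4) : ℝ)) (fun n => by positivity)
    (fun a b ha hab => Real.rpow_le_rpow_of_nonpos (by exact_mod_cast ha)
      (by exact_mod_cast hab) (by norm_num))).trans ?_
  exact mul_le_mul_of_nonneg_left (hsum.sum_le_tsum _ fun n _ => by positivity)
    (Nat.cast_nonneg _)

end PrimeSums

/-! ### Large primes, smooth moduli, and the choice of parameters -/

section Final

variable {K : Type*} [Field K] [NumberField K] {ι : Type*} [Fintype ι]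

/-- The primes of norm above a fixed power of `s + 1` contribute little: the exponential is
`O(N(p) ^ (1/2))`, so the terms are `O(s² N(p) ^ (-3/2))`. -/
lemma large_le (K : Type*) [Field K] [NumberField K] :
    ∃ C : ℝ, 1 ≤ C ∧ ∀ (T : Finset (Ideal (𝓞 K))) (s : ℕ), (∀ q ∈ T, Prime q) →
      ∑ p ∈ T.filter (fun q => ¬ (Ideal.absNorm q : ℝ) ≤ (C * (s + 1)) ^ 8),
          (s : ℝ) ^ 2 * (16 / (Ideal.absNorm p : ℝ) ^ 2 *
            Real.exp (64 * ∑ q ∈ T.filter (fun q => Ideal.absNorm q ≤ Ideal.absNorm p),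
              (Ideal.absNorm q : ℝ)⁻¹)) ≤ 1 / 4 := by
  obtain ⟨M, hM0, hM⟩ := sum_rpow_norm_le K
  obtain ⟨B, hB⟩ : ∃ B : ℝ, B = 64 * (3 * Module.finrank ℤ (𝓞 K)) := ⟨_, rfl⟩
  obtain ⟨E, hE⟩ : ∃ E : ℝ, E = Real.exp (B ^ 2 / 2) := ⟨_, rfl⟩
  have hE0 : 0 < E := hE ▸ Real.exp_pos _
  have hEM : 0 ≤ E * M := by positivity
  obtain ⟨C, hC⟩ : ∃ C : ℝ, C = 64 * (E * M) + 1 := ⟨_, rfl⟩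
  have hC1 : 1 ≤ C := by linarith
  refine ⟨C, hC1, fun T s hT => ?_⟩
  have hs0 : (0 : ℝ) ≤ s := s.cast_nonneg
  obtain ⟨z, hz⟩ : ∃ z : ℝ, z = C * (s + 1) := ⟨_, rfl⟩
  rw [← hz]
  have hz0 : 0 < z := by rw [hz]; positivity
  have hterm : ∀ p ∈ T.filter (fun q => ¬ (Ideal.absNorm q : ℝ) ≤ z ^ 8),
      (s : ℝ) ^ 2 * (16 / (Ideal.absNorm p : ℝ) ^ 2 *
            Real.exp (64 * ∑ q ∈ T.filter (fun q => Ideal.absNorm q ≤ Ideal.absNorm p),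
              (Ideal.absNorm q : ℝ)⁻¹)) ≤
        (s : ℝ) ^ 2 * (16 * E * (z ^ 2)⁻¹) * (Ideal.absNorm p : ℝ) ^ (-(5 / 4) : ℝ) := by
    intro p hp
    obtain ⟨hpT, hpz⟩ := Finset.mem_filter.mp hp
    have hN2 := two_le_absNorm (hT p hpT)
    have h1 := sum_inv_norm_le (S := T.filter (fun q => Ideal.absNorm q ≤ Ideal.absNorm p))
      (fun q hq => hT q (Finset.mem_filter.mp hq).1) hN2
      (fun q hq => Nat.cast_le.mpr (Finset.mem_filter.mp hq).2)
    obtain ⟨N, hN⟩ : ∃ N : ℝ, N = Ideal.absNorm p := ⟨_, rfl⟩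
    obtain ⟨P, hP⟩ : ∃ P : ℝ, P = ∑ q ∈ T.filter (fun q => Ideal.absNorm q ≤ Ideal.absNorm p),
      (Ideal.absNorm q : ℝ)⁻¹ := ⟨_, rfl⟩
    rw [← hP, ← hN] at h1 ⊢
    rw [← hN] at hN2 hpz
    have hN0 : 0 < N := by linarith
    have hl : 0 ≤ Real.log N := Real.log_nonneg (by linarith)
    have h2 : 64 * P ≤ 1 / 2 * Real.log N + B ^ 2 / 2 := by
      have h3 := sq_nonneg (Real.sqrt (Real.log N) - B)
      have h4 := Real.sq_sqrt hl
      have h5 : 64 * P ≤ B * Real.sqrt (Real.log N) := by rw [hB]; linarith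
      nlinarith
    have h3 : Real.exp (64 * P) ≤ E * N ^ (1 / 2 : ℝ) := by
      refine (Real.exp_le_exp.mpr h2).trans (le_of_eq ?_)
      rw [Real.exp_add, hE, Real.rpow_def_of_pos hN0, mul_comm, mul_comm (1 / 2) (Real.log N)]
    have h4 : N ^ (-(1 / 4) : ℝ) ≤ (z ^ 2)⁻¹ := by
      refine (Real.rpow_le_rpow_of_nonpos (by positivity) (not_le.mp hpz).le
        (by norm_num)).trans (le_of_eq ?_)
      rw [← Real.rpow_natCast, ← Real.rpow_mul hz0.le, ← Real.rpow_natCast z 2,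
        ← Real.rpow_neg hz0.le]
      norm_num
    have h5 : N ^ (1 / 2 : ℝ) / N ^ 2 = N ^ (-(1 / 4) : ℝ) * N ^ (-(5 / 4) : ℝ) := by
      rw [← Real.rpow_add hN0, ← Real.rpow_natCast N 2, ← Real.rpow_sub hN0]
      norm_num
    have h6 : 16 / N ^ 2 * Real.exp (64 * P) ≤
        16 * E * (z ^ 2)⁻¹ * N ^ (-(5 / 4) : ℝ) := by
      calc 16 / N ^ 2 * Real.exp (64 * P) ≤ 16 / N ^ 2 * (E * N ^ (1 / 2 : ℝ)) := by gcongr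
        _ = 16 * E * (N ^ (1 / 2 : ℝ) / N ^ 2) := by ring
        _ = 16 * E * N ^ (-(1 / 4) : ℝ) * N ^ (-(5 / 4) : ℝ) := by rw [h5]; ring
        _ ≤ _ := by gcongr
    rw [mul_assoc]
    exact mul_le_mul_of_nonneg_left h6 (by positivity)
  refine (Finset.sum_le_sum hterm).trans ?_
  rw [← Finset.mul_sum]
  have h1 := hM (T.filter (fun q => ¬ (Ideal.absNorm q : ℝ) ≤ z ^ 8))
    (fun q hq => hT q (Finset.mem_filter.mp hq).1)
  refine (mul_le_mul_of_nonneg_left h1 (by positivity)).trans ?_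
  have h2 : (s : ℝ) ^ 2 * (16 * E * (z ^ 2)⁻¹) * M = (s ^ 2 * (16 * (E * M))) / z ^ 2 := by
    field_simp
  rw [h2, div_le_iff₀ (by positivity), hz]
  have h3 : 64 * (E * M) ≤ C ^ 2 := by nlinarith
  have h4 : (s : ℝ) ^ 2 ≤ (s + 1) ^ 2 := by nlinarith
  have h5 : (s : ℝ) ^ 2 * (64 * (E * M)) ≤ (s + 1) ^ 2 * C ^ 2 :=
    mul_le_mul h4 h3 (by positivity) (by positivity)
  nlinarith

/-- Rankin's trick: the density of the classes with `y`-smooth moduli of norm at least `X`. -/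
lemma smooth_le {T : Finset (Ideal (𝓞 K))} (hT : ∀ q ∈ T, Prime q) {γ : ℕ}
    {e : ι → Ideal (𝓞 K) → ℕ} (he : ∀ k q, e k q ≤ γ) {s : ℕ}
    (hs : ∀ k, (Finset.univ.filter fun l => ∀ q ∈ T, e l q = e k q).card ≤ s)
    {X y σ : ℝ} (hX : 0 < X) (hy : 2 ≤ y) (hσ0 : 0 ≤ σ) (hσ : σ ≤ 1 / 2)
    (hXe : ∀ k, X ≤ Ideal.absNorm (idealOf T (e k))) :
    ∑ k ∈ supp T e (T.filter fun q => (Ideal.absNorm q : ℝ) ≤ y),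
        (Ideal.absNorm (idealOf T (e k)) : ℝ)⁻¹ ≤
      X ^ (-σ) * (s * Real.exp (4 * (y ^ σ *
        (3 * Module.finrank ℤ (𝓞 K) * Real.sqrt (Real.log y))))) := by
  set S := T.filter fun q => (Ideal.absNorm q : ℝ) ≤ y with hS
  have hST : S ⊆ T := Finset.filter_subset _ _
  have hSp : ∀ q ∈ S, Prime q := fun q hq => hT q (hST hq)
  have hpos : ∀ q ∈ S, (0 : ℝ) < Ideal.absNorm q := fun q hq => by
    linarith [two_le_absNorm (hSp q hq)]
  have h1 : ∀ k ∈ supp T e S, (Ideal.absNorm (idealOf T (e k)) : ℝ)⁻¹ ≤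
      X ^ (-σ) * ∏ q ∈ S, ((Ideal.absNorm q : ℝ) ^ (σ - 1)) ^ e k q := by
    intro k hk
    have hN := hXe k
    have hN0 : 0 < (Ideal.absNorm (idealOf T (e k)) : ℝ) := hX.trans_le hN
    have h2 : (Ideal.absNorm (idealOf T (e k)) : ℝ) ^ (σ - 1) =
        ∏ q ∈ S, ((Ideal.absNorm q : ℝ) ^ (σ - 1)) ^ e k q := by
      rw [idealOf_congr hST (by simpa [supp] using hk), absNorm_idealOf hSp,
        ← Real.finsetProd_rpow _ _ fun q hq => pow_nonneg (hpos q hq).le _]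
      refine Finset.prod_congr rfl fun q hq => ?_
      rw [← Real.rpow_natCast, ← Real.rpow_natCast, ← Real.rpow_mul (hpos q hq).le,
        ← Real.rpow_mul (hpos q hq).le, mul_comm]
    rw [← h2]
    calc (Ideal.absNorm (idealOf T (e k)) : ℝ)⁻¹
        = (Ideal.absNorm (idealOf T (e k)) : ℝ) ^ (-σ) *
          (Ideal.absNorm (idealOf T (e k)) : ℝ) ^ (σ - 1) := by
          rw [← Real.rpow_add hN0, ← Real.rpow_neg_one]
          ring_nf
      _ ≤ _ := by
          refine mul_le_mul_of_nonneg_right ?_ (by positivity)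
          exact Real.rpow_le_rpow_of_nonpos hX hN (by linarith)
  refine (Finset.sum_le_sum h1).trans ?_
  rw [← Finset.mul_sum]
  refine mul_le_mul_of_nonneg_left ?_ (by positivity)
  refine (sum_prod_le (supp T e S) S e (fun _ => Finset.range (γ + 1))
    (fun q j => ((Ideal.absNorm q : ℝ) ^ (σ - 1)) ^ j) (fun q j => by positivity)
    (fun k _ q _ => Finset.mem_range.mpr (Nat.lt_succ_of_le (he k q))) s
    (fun k hk => by convert card_fiber_le hs _ subset_rfl hk)).trans ?_
  refine mul_le_mul_of_nonneg_left ?_ s.cast_nonneg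
  have hlocal : ∀ q ∈ S, ∑ j ∈ Finset.range (γ + 1), ((Ideal.absNorm q : ℝ) ^ (σ - 1)) ^ j ≤
      Real.exp (4 * (y ^ σ * (Ideal.absNorm q : ℝ)⁻¹)) := by
    intro q hq
    have hN2 := two_le_absNorm (hSp q hq)
    have hNy := (Finset.mem_filter.mp hq).2
    have hN0 := hpos q hq
    obtain ⟨N, hN⟩ : ∃ N : ℝ, N = Ideal.absNorm q := ⟨_, rfl⟩
    rw [← hN] at hN2 hNy hN0 ⊢
    have ht0 : 0 ≤ N ^ (σ - 1) := by positivity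
    have ht : N ^ (σ - 1) ≤ 3 / 4 := by
      calc N ^ (σ - 1) ≤ N ^ (-(1 / 2) : ℝ) :=
            Real.rpow_le_rpow_of_exponent_le (by linarith) (by linarith)
        _ ≤ 2 ^ (-(1 / 2) : ℝ) := Real.rpow_le_rpow_of_nonpos (by norm_num) hN2 (by norm_num)
        _ = (Real.sqrt 2)⁻¹ := by rw [Real.rpow_neg (by norm_num), Real.sqrt_eq_rpow]
        _ ≤ (4 / 3)⁻¹ := inv_anti₀ (by norm_num) (Real.le_sqrt_of_sq_le (by norm_num))
        _ = 3 / 4 := by norm_num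
    have ht' : N ^ (σ - 1) ≤ y ^ σ * N⁻¹ := by
      rw [Real.rpow_sub hN0, Real.rpow_one, div_eq_mul_inv]
      gcongr
    refine geom_le ht0 (by linarith) ?_ _
    refine le_trans ?_ (Real.exp_le_exp.mpr (mul_le_mul_of_nonneg_left ht' (by norm_num)))
    have h2 := Real.add_one_le_exp (4 * N ^ (σ - 1))
    refine le_trans ?_ h2
    rw [inv_le_iff_one_le_mul₀ (by linarith)]
    nlinarith
  refine (Finset.prod_le_prod (fun q _ => Finset.sum_nonneg fun j _ => by positivity)
    hlocal).trans ?_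
  rw [← Real.exp_sum, ← Finset.mul_sum, ← Finset.mul_sum]
  refine Real.exp_le_exp.mpr (mul_le_mul_of_nonneg_left (mul_le_mul_of_nonneg_left ?_
    (by positivity)) (by norm_num))
  exact sum_inv_norm_le hSp hy fun q hq => (Finset.mem_filter.mp hq).2

/-- Choice of parameters: with `y = (C (s + 1)) ^ 8` and `y ^ σ = √(log (s + 2))`, every factor of
the bound for smooth moduli is a power of `s + 1`, and `c` can be chosen to beat the others. -/
lemma parameters {C D : ℝ} (hC : 1 ≤ C) (hD : 0 ≤ D) :
    ∃ c : ℝ, 0 < c ∧ ∀ s : ℕ, 1 ≤ s → ∃ σ : ℝ, 0 ≤ σ ∧ σ ≤ 1 / 2 ∧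
      (Real.exp (c * (Real.log (s + 1)) ^ 2 / Real.log (Real.log (s + 2)))) ^ (-σ) *
        (s * Real.exp (4 * (((C * (s + 1)) ^ 8) ^ σ *
          (D * Real.sqrt (Real.log ((C * (s + 1)) ^ 8)))))) ≤ 1 / 4 := by
  have hlC : 0 ≤ Real.log C := Real.log_nonneg hC
  obtain ⟨G, hG⟩ : ∃ G : ℝ, G = 8 * (2 * Real.log C + 1) := ⟨_, rfl⟩
  have hG1 : 8 ≤ G := by linarith
  refine ⟨2 * G * (3 + 8 * D * G), by positivity, fun s hs => ?_⟩
  have hs1 : (1 : ℝ) ≤ s := by exact_mod_cast hs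
  obtain ⟨u, hu⟩ : ∃ u : ℝ, u = Real.log (s + 1) := ⟨_, rfl⟩
  obtain ⟨v, hv⟩ : ∃ v : ℝ, v = Real.log (s + 2) := ⟨_, rfl⟩
  obtain ⟨y, hy⟩ : ∃ y : ℝ, y = (C * (s + 1)) ^ 8 := ⟨_, rfl⟩
  obtain ⟨L, hL⟩ : ∃ L : ℝ, L = Real.log y := ⟨_, rfl⟩
  rw [← hu, ← hv, ← hy, ← hL]
  have hu2 : Real.log 2 ≤ u := hu ▸ Real.log_le_log (by norm_num) (by linarith)
  have hlog2 := Real.log_two_gt_d9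
  have hu0 : 0 < u := by linarith
  have hv1 : 1 < v := by
    rw [hv, Real.lt_log_iff_exp_lt (by linarith)]
    linarith [Real.exp_one_lt_three]
  have hvu : v ≤ 2 * u := by
    have h1 : Real.log ((s : ℝ) + 2) ≤ Real.log ((s + 1) ^ 2) :=
      Real.log_le_log (by linarith) (by nlinarith)
    rw [Real.log_pow] at h1
    rw [hu, hv]
    exact_mod_cast h1
  have hl0 : 0 < Real.log v := Real.log_pos hv1
  have hlv : Real.log v ≤ v := (Real.log_le_sub_one_of_pos (by linarith)).trans (by linarith)
  have hy0 : 0 < y := by rw [hy]; positivity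
  have hLeq : L = 8 * (Real.log C + u) := by
    rw [hL, hy, Real.log_pow, Real.log_mul (by linarith) (by linarith), hu]
    norm_num
  have hLG : L ≤ G * u := by rw [hLeq, hG]; nlinarith
  have hL8 : 8 * u ≤ L := by linarith
  have hL0 : 0 < L := by linarith
  refine ⟨Real.log v / (2 * L), by positivity, ?_, ?_⟩
  · rw [div_le_div_iff₀ (by positivity) (by norm_num)]
    linarith
  have h1 : y ^ (Real.log v / (2 * L)) = Real.sqrt v := by
    rw [Real.rpow_def_of_pos hy0, ← hL, Real.sqrt_eq_rpow, Real.rpow_def_of_pos (by linarith)]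
    congr 1
    field_simp
  have h2 : Real.sqrt v * Real.sqrt L ≤ 2 * G * u := by
    rw [← Real.sqrt_mul (by linarith)]
    refine Real.sqrt_le_iff.mpr ⟨by positivity, ?_⟩
    calc v * L ≤ 2 * u * (G * u) := mul_le_mul hvu hLG hL0.le (by linarith)
      _ ≤ (2 * G * u) ^ 2 := by nlinarith [mul_nonneg (sq_nonneg u) (by linarith : 0 ≤ G)]
  have h3 : (s : ℝ) ≤ Real.exp u := by
    rw [hu, Real.exp_log (by linarith)]
    linarith
  have h4 : 2 * G * (3 + 8 * D * G) * u ^ 2 / Real.log v * -(Real.log v / (2 * L)) ≤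
      -((3 + 8 * D * G) * u) := by
    have h5 : 2 * G * (3 + 8 * D * G) * u ^ 2 / Real.log v * -(Real.log v / (2 * L)) =
        -((3 + 8 * D * G) * u * (G * u / L)) := by
      field_simp
    rw [h5]
    have h6 : 1 ≤ G * u / L := by rw [le_div_iff₀ hL0]; linarith
    have h7 : 0 ≤ (3 + 8 * D * G) * u := by positivity
    nlinarith
  rw [h1, ← Real.exp_mul]
  calc Real.exp (2 * G * (3 + 8 * D * G) * u ^ 2 / Real.log v * -(Real.log v / (2 * L))) *
        (s * Real.exp (4 * (Real.sqrt v * (D * Real.sqrt L))))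
      ≤ Real.exp (-((3 + 8 * D * G) * u)) * (Real.exp u * Real.exp (8 * D * G * u)) := by
        have h5 : 4 * (Real.sqrt v * (D * Real.sqrt L)) ≤ 8 * D * G * u := by
          linarith [mul_le_mul_of_nonneg_left h2 hD]
        refine mul_le_mul (Real.exp_le_exp.mpr h4) ?_ (by positivity) (Real.exp_pos _).le
        exact mul_le_mul h3 (Real.exp_le_exp.mpr h5) (Real.exp_pos _).le (Real.exp_pos _).le
    _ = Real.exp (-(2 * u)) := by
        rw [← Real.exp_add, ← Real.exp_add]
        ring_nf
    _ ≤ Real.exp (-(2 * Real.log 2)) := Real.exp_le_exp.mpr (by linarith)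
    _ = 1 / 4 := by
        rw [Real.exp_neg, two_mul, Real.exp_add, Real.exp_log (by norm_num)]
        norm_num

end Final

end MinMod

/-- Erdős' minimum modulus problem in number fields. -/
theorem minimum_modulus_number_field (K : Type*) [Field K] [NumberField K] :
    ∃ c : ℝ, 0 < c ∧
      ∀ (n : ℕ) (hn : 0 < n) (a : Fin n → 𝓞 K) (Idl : Fin n → Ideal (𝓞 K)) (s : ℕ),
        (∀ i : Fin n, Distinguishable (Idl i)) →
        (∀ x : 𝓞 K, ∃ i : Fin n, x - a i ∈ Idl i) →
        (∀ I₀ : Ideal (𝓞 K), (Finset.univ.filter fun i : Fin n => Idl i = I₀).card ≤ s) →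
        (∃ I₀ : Ideal (𝓞 K), (Finset.univ.filter fun i : Fin n => Idl i = I₀).card = s) →
        ∃ i : Fin n, (Ideal.absNorm (Idl i) : ℝ) ≤
          Real.exp (c * (Real.log (s + 1)) ^ 2 / Real.log (Real.log (s + 2))) := by
  obtain ⟨C, hC, hlarge⟩ := MinMod.large_le K
  obtain ⟨c, hc, hparam⟩ := MinMod.parameters hC
    (D := 3 * Module.finrank ℤ (𝓞 K)) (by positivity)
  refine ⟨c, hc, fun n hn a Idl s hdist hcov hmult _ => ?_⟩
  by_contra! hcon
  have hs : 1 ≤ s := by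
    refine le_trans (Finset.card_pos.mpr ⟨⟨0, hn⟩, ?_⟩) (hmult (Idl ⟨0, hn⟩))
    simp
  obtain ⟨σ, hσ0, hσ, hle⟩ := hparam s hs
  have hne : ∀ i, Idl i ≠ ⊥ := fun i => (hdist i).1
  obtain ⟨nf, hnf⟩ : ∃ nf : Fin n → Multiset (Ideal (𝓞 K)),
      nf = fun i => UniqueFactorizationMonoid.normalizedFactors (Idl i) := ⟨_, rfl⟩
  obtain ⟨e, he⟩ : ∃ e : Fin n → Ideal (𝓞 K) → ℕ, e = fun i q => (nf i).count q := ⟨_, rfl⟩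
  obtain ⟨T, hT⟩ : ∃ T : Finset (Ideal (𝓞 K)),
      T = Finset.univ.biUnion fun i => (nf i).toFinset := ⟨_, rfl⟩
  have hTp : ∀ q ∈ T, Prime q := by
    intro q hq
    rw [hT] at hq
    obtain ⟨i, _, hi⟩ := Finset.mem_biUnion.mp hq
    rw [Multiset.mem_toFinset, hnf] at hi
    exact UniqueFactorizationMonoid.prime_of_normalized_factor q hi
  have hI : ∀ i, MinMod.idealOf T (e i) = Idl i := by
    intro i
    rw [MinMod.idealOf_eq_prod hTp, he, ← Finset.prod_multiset_count_of_subset, hnf]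
    · exact Ideal.prod_normalizedFactors_eq_self (hne i)
    · rw [hT]
      exact Finset.subset_biUnion_of_mem (fun i => (nf i).toFinset) (Finset.mem_univ i)
  have heγ : ∀ i q, e i q ≤ ∑ j, (nf j).card := by
    intro i q
    rw [he]
    exact (Multiset.count_le_card q (nf i)).trans
      (Finset.single_le_sum (f := fun j => (nf j).card) (fun _ _ => Nat.zero_le _)
        (Finset.mem_univ i))
  have hfib : ∀ k, (Finset.univ.filter fun l => ∀ q ∈ T, e l q = e k q).card ≤ s := by
    intro k
    refine (Finset.card_le_card fun l hl => ?_).trans (hmult (Idl k))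
    simp only [Finset.mem_filter, Finset.mem_univ, true_and] at hl ⊢
    rw [← hI l, ← hI k, MinMod.idealOf_eq_prod hTp, MinMod.idealOf_eq_prod hTp]
    exact Finset.prod_congr rfl fun q hq => by rw [hl q hq]
  have hone := MinMod.one_le_of_cover hTp a heγ hfib (fun x => by simpa only [hI] using hcov x)
    ((C * (s + 1)) ^ 8)
  have hy : (2 : ℝ) ≤ (C * (s + 1)) ^ 8 := by
    have h1 : (1 : ℝ) ≤ s := by exact_mod_cast hs
    have h2 : (2 : ℝ) ≤ C * (s + 1) := by nlinarith
    calc (2 : ℝ) ≤ 2 ^ 8 := by norm_num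
      _ ≤ _ := pow_le_pow_left₀ (by norm_num) h2 8
  have hsmooth := MinMod.smooth_le hTp heγ hfib (Real.exp_pos _) hy hσ0 hσ
    (fun k => by rw [hI]; exact (hcon k).le)
  have hbig := hlarge T s hTp
  linarith
end

section
/- There exists an absolute constant c > 0 such that for every covering system of ℤ of multiplicity s, the smallest modulus is at most exp(c · log²(s+1) / log log(s+2)). -/
/-!
The proof is the distortion method for covering systems, run with a uniform initial measure on
the small primes. Work on `ZMod N`, where `N` is a common multiple of the moduli, and suppose all
moduli exceed `M`. For each `k` consider the progressions whose modulus is `k`-smooth (all prime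
factors `< k`). A *stage* (`IsStage`) is a probability density `w` on `ZMod N` that only depends on
the residue of `x` modulo a `k`-smooth number, gives each class modulo a `k`-smooth `d` mass at most
`τ(d) / d`, and gives the union of these progressions mass at most some `ε`.

*Small primes* (`isStage_one`). For `k = y = (s + 2) ^ (2h)`, with `h` an absolute constant, take
`w = 1`. The union bound is `s * ∑ 1 / l` over `y`-smooth `l > M`. Rankin's trick bounds it by
`s * M ^ (-ε) * exp (16 log y + 8 y ^ ε)`, via an Euler product and a Chebyshev-type bound on
`∑ log p / p`. With `y ^ ε = log y` this is less than `1 / 2` as soon as `log M` is a large multiple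
of `log² y / log log y`, which is the bound in the theorem.

*Large primes* (`IsStage.succ`). Passing a prime `p`, let `α` be the fibrewise proportion of points
covered by progressions whose modulus is divisible by `p` and `(p + 1)`-smooth. Multiply `w` by
`distortion`: where `α < 1 / 2` it removes all the newly covered mass, elsewhere it reduces it as
much as is possible with a density at most `2`. Averages over fibres are preserved, the factor `2`
is absorbed by `τ(d) / d`, and the newly covered mass is at most the second moment `𝔼 w α²`. Pairs
of progressions meet in a class modulo an lcm, so the second moment is at most
`4 s² / p² * ∑ τ(l)³ / l` over `p`-smooth `l`, hence `O(s² p ^ (-3/2))`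
(`second_moment_le`, `exists_sum_smooth_divisors_le`).

Summing over `p ≥ y`, the total loss is `O(s² / √y)`, at most `1 / 2` for a suitable `h`. Once `k`
exceeds `N` all progressions have been treated and the covered mass is less than `1`, so they do not
cover.
-/

open scoped Classical

namespace CoveringSystems
open Finset
open scoped BigOperators

/-! ### Sums over primes and smooth numbers -/

/-- A weak form of Mertens' first theorem, obtained by comparing `∏ p ^ ⌊k / p⌋ ∣ k!` with
`k! ≤ k ^ k`. -/
lemma sum_log_div_le (k : ℕ) (hk : 1 ≤ k) :
    ∑ p ∈ k.primesBelow, Real.log p / p ≤ 2 * Real.log k := by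
  have hdvd : ∏ p ∈ k.primesBelow, p ^ (k / p) ∣ k.factorial := by
    apply Finset.prod_dvd_of_isRelPrime
    · intro p hp q hq hpq
      have hp' := Nat.prime_of_mem_primesBelow hp
      have hq' := Nat.prime_of_mem_primesBelow hq
      exact Nat.coprime_iff_isRelPrime.mp
        (Nat.Coprime.pow _ _ ((Nat.coprime_primes hp' hq').mpr hpq))
    · intro p hp
      have hp' := Nat.prime_of_mem_primesBelow hp
      have := Fact.mk hp'
      refine dvd_trans ?_ (Nat.factorial_dvd_factorial (Nat.mul_div_le k p))
      rw [padicValNat_dvd_iff_le (Nat.factorial_ne_zero _), padicValNat_factorial_mul]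
      omega
  have hle : ∏ p ∈ k.primesBelow, p ^ (k / p) ≤ k ^ k :=
    (Nat.le_of_dvd (Nat.factorial_pos k) hdvd).trans (Nat.factorial_le_pow k)
  have hlog : ∑ p ∈ k.primesBelow, ((k / p : ℕ) : ℝ) * Real.log p ≤ k * Real.log k := by
    have h1 : ((∏ p ∈ k.primesBelow, p ^ (k / p) : ℕ) : ℝ) ≤ (k : ℝ) ^ k := by exact_mod_cast hle
    have h0 : (0 : ℝ) < ((∏ p ∈ k.primesBelow, p ^ (k / p) : ℕ) : ℝ) := by
      exact_mod_cast Finset.prod_pos fun p hp =>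
        pow_pos (Nat.prime_of_mem_primesBelow hp).pos _
    have h2 := Real.log_le_log h0 h1
    rw [Real.log_pow] at h2
    push_cast at h2
    rw [Real.log_prod (fun p hp => by
      have := (Nat.prime_of_mem_primesBelow hp).pos
      positivity)] at h2
    simpa [Real.log_pow] using h2
  have hk0 : (0 : ℝ) < k := by exact_mod_cast hk
  have hterm : ∑ p ∈ k.primesBelow, (k : ℝ) * (Real.log p / p) ≤
      ∑ p ∈ k.primesBelow, 2 * (((k / p : ℕ) : ℝ) * Real.log p) := by
    refine Finset.sum_le_sum fun p hp => ?_
    have hp' := Nat.prime_of_mem_primesBelow hp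
    have hpk : p ≤ k := (Nat.lt_of_mem_primesBelow hp).le
    have hp0 : (0 : ℝ) < p := by exact_mod_cast hp'.pos
    have hl : 0 ≤ Real.log p := Real.log_natCast_nonneg p
    -- `⌊x⌋ ≥ x / 2` for `x ≥ 1`
    have h1 : k ≤ 2 * (k / p) * p := by
      have ha := Nat.div_pos hpk hp'.pos
      have hb := Nat.lt_mul_div_succ k hp'.pos
      nlinarith
    have h2 : (k : ℝ) / p ≤ 2 * ((k / p : ℕ) : ℝ) := by
      rw [div_le_iff₀ hp0]; exact_mod_cast h1
    calc (k : ℝ) * (Real.log p / p) = (k / p) * Real.log p := by ring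
      _ ≤ (2 * ((k / p : ℕ) : ℝ)) * Real.log p := by gcongr
      _ = _ := by ring
  rw [← Finset.mul_sum, ← Finset.mul_sum] at hterm
  have : (k : ℝ) * ∑ p ∈ k.primesBelow, Real.log p / p ≤ k * (2 * Real.log k) := by
    linarith
  exact le_of_mul_le_mul_left this hk0

/-- Euler product bound: for a nonnegative multiplicative `f`, a sum over `k`-smooth numbers is at
most `∏ (1 + g p) ≤ exp (∑ g p)`, where `g p` bounds the contribution of the positive powers of
`p`. -/
lemma sum_smooth_le {f g : ℕ → ℝ} (hf0 : ∀ n, 0 ≤ f n) (hf1 : f 1 = 1)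
    (hmul : ∀ {m n}, Nat.Coprime m n → f (m * n) = f m * f n)
    (hsum : ∀ {p : ℕ}, p.Prime → Summable fun n : ℕ => f (p ^ (n + 1)))
    (hg : ∀ {p : ℕ}, p.Prime → ∑' n : ℕ, f (p ^ (n + 1)) ≤ g p)
    (k : ℕ) (D : Finset ℕ) (hD : ∀ l ∈ D, l ∈ k.smoothNumbers) :
    ∑ l ∈ D, f l ≤ Real.exp (∑ p ∈ k.primesBelow, g p) := by
  have hs : ∀ {p : ℕ}, p.Prime → Summable fun n : ℕ => f (p ^ n) := fun hp =>
    (summable_nat_add_iff 1).mp (hsum hp)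
  obtain ⟨-, h2⟩ := EulerProduct.summable_and_hasSum_smoothNumbers_prod_primesBelow_tsum
    hf1 hmul (fun hp => (hs hp).norm) k
  have hle : ∑ l ∈ D, f l ≤ ∏ p ∈ k.primesBelow, ∑' n : ℕ, f (p ^ n) := by
    have := sum_le_hasSum (D.subtype (· ∈ k.smoothNumbers)) (fun i _ => hf0 i) h2
    rwa [Finset.sum_subtype_of_mem (f := f) hD] at this
  refine hle.trans ?_
  rw [Real.exp_sum]
  refine Finset.prod_le_prod (fun p _ => tsum_nonneg fun n => hf0 _) fun p hp => ?_
  have hp' := Nat.prime_of_mem_primesBelow hp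
  rw [(hs hp').tsum_eq_zero_add, pow_zero, hf1]
  linarith [hg hp', Real.add_one_le_exp (g p)]

/-- The ratio `τ(l) / l`, where `τ` is the number-of-divisors function. It bounds the mass that a
stage gives to a residue class modulo `l`. -/
noncomputable def divisorDensity (l : ℕ) : ℝ := (l.divisors.card : ℝ) / l

/-- `∑ τ(l)³ / l = O(√k)` over `k`-smooth `l`. The true order is a power of `log k`; any power of
`k` below `1` suffices for the loss to be summable over the primes. -/
lemma exists_sum_smooth_divisors_le :
    ∃ C : ℝ, 0 < C ∧ ∀ (k : ℕ), 1 ≤ k → ∀ D : Finset ℕ, (∀ l ∈ D, l ∈ k.smoothNumbers) →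
      ∑ l ∈ D, (l.divisors.card : ℝ) ^ 2 * divisorDensity l ≤ C * √k := by
  have hS : Summable fun n : ℕ => ((n : ℝ) + 2) ^ 3 * (1 / 2) ^ n := by
    have h := (summable_nat_add_iff 2).mpr (summable_pow_mul_geometric_of_norm_lt_one (R := ℝ) 3
      (r := 1 / 2) (by norm_num))
    have h' := h.mul_left 4
    refine h'.congr fun n => ?_
    push_cast
    ring
  set C₀ : ℝ := ∑' n : ℕ, ((n : ℝ) + 2) ^ 3 * (1 / 2) ^ n with hC₀
  have hC₀pos : 0 < C₀ := by
    have := hS.sum_le_tsum {0} (fun i _ => by positivity)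
    simp only [sum_singleton] at this
    norm_num at this
    rw [hC₀]; norm_num; linarith
  set K : ℕ := ⌈Real.exp (4 * C₀)⌉₊ with hK
  refine ⟨Real.exp (C₀ * K), Real.exp_pos _, fun k hk D hD => ?_⟩
  have hterm : ∀ {p : ℕ}, p.Prime → ∀ n : ℕ,
      (((p ^ (n + 1)).divisors.card : ℝ)) ^ 2 * divisorDensity (p ^ (n + 1)) ≤
        (((n : ℝ) + 2) ^ 3 * (1 / 2) ^ n) * (1 / p) := by
    intro p hp n
    have hp2 : (2 : ℝ) ≤ p := by exact_mod_cast hp.two_le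
    rw [divisorDensity, Nat.divisors_prime_pow hp]
    simp only [card_map, card_range]
    push_cast
    have h1 : 1 / (p : ℝ) ^ n ≤ (1 / 2) ^ n := by
      rw [div_pow, one_pow]; gcongr
    calc _ = ((n : ℝ) + 2) ^ 3 * (1 / (p : ℝ) ^ n) * (1 / p) := by
          have : (p : ℝ) ≠ 0 := by positivity
          field_simp; ring
      _ ≤ _ := by gcongr
  have hnn : ∀ n : ℕ, 0 ≤ (n.divisors.card : ℝ) ^ 2 * divisorDensity n := fun n => by
    unfold divisorDensity; positivity
  have hb := sum_smooth_le (f := fun l => (l.divisors.card : ℝ) ^ 2 * divisorDensity l)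
    (g := fun p => C₀ * (1 / p)) hnn (by simp [divisorDensity])
    (fun {m n} h => by
      simp only [divisorDensity, Nat.Coprime.card_divisors_mul h]
      push_cast
      rw [mul_div_mul_comm]; ring)
    (fun hp => Summable.of_nonneg_of_le (fun n => hnn _) (hterm hp) (hS.mul_right _))
    (fun hp => by
      rw [hC₀, ← tsum_mul_right]
      exact Summable.tsum_le_tsum (hterm hp)
        (Summable.of_nonneg_of_le (fun n => hnn _) (hterm hp) (hS.mul_right _)) (hS.mul_right _))
    k D hD
  refine hb.trans ?_
  have hk0 : (0 : ℝ) < k := by exact_mod_cast hk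
  have hsplit : ∑ p ∈ k.primesBelow, C₀ * (1 / (p : ℝ)) ≤ C₀ * K + Real.log k / 2 := by
    have h1 : ∀ p ∈ k.primesBelow, C₀ * (1 / (p : ℝ)) ≤
        C₀ * (if p < K then 1 else 0) + (1 / 4) * (Real.log p / p) := by
      intro p hp
      have hp' := Nat.prime_of_mem_primesBelow hp
      have hp1 : (1 : ℝ) ≤ p := by exact_mod_cast hp'.one_le
      have hl : 0 ≤ Real.log p := Real.log_natCast_nonneg p
      split_ifs with h
      · have : 1 / (p : ℝ) ≤ 1 := by rw [div_le_one (by linarith)]; exact hp1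
        have h3 : 0 ≤ Real.log p / p := by positivity
        nlinarith
      · have h2 : Real.exp (4 * C₀) ≤ p := (Nat.le_ceil _).trans (by exact_mod_cast not_lt.mp h)
        have h3 : 4 * C₀ ≤ Real.log p := (Real.le_log_iff_exp_le (by linarith)).mpr h2
        have : C₀ * (1 / (p : ℝ)) = (1 / 4) * ((4 * C₀) / p) := by ring
        rw [this, mul_zero, zero_add]
        gcongr
    refine (Finset.sum_le_sum h1).trans ?_
    rw [Finset.sum_add_distrib, ← Finset.mul_sum, ← Finset.mul_sum]
    have h2 := sum_log_div_le k hk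
    have h3 : ∑ p ∈ k.primesBelow, (if p < K then (1 : ℝ) else 0) ≤ K := by
      rw [Finset.sum_boole]
      have : (k.primesBelow.filter (· < K)).card ≤ (range K).card :=
        card_le_card fun p hp => mem_range.mpr (mem_filter.mp hp).2
      rw [card_range] at this
      exact_mod_cast this
    have := mul_le_mul_of_nonneg_left h3 hC₀pos.le
    linarith
  calc _ ≤ Real.exp (C₀ * K + Real.log k / 2) := Real.exp_le_exp.mpr hsplit
    _ = _ := by
      rw [Real.exp_add, Real.exp_half, Real.exp_log hk0]

/-- The Euler product estimate used in Rankin's trick. Convexity reduces `∑ p ^ (ε - 1)` to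
`∑ log p / p`. -/
lemma sum_smooth_rpow_le (k : ℕ) (hk : 2 ≤ k) (ε : ℝ) (hε : ε ≤ 1 / 2)
    (D : Finset ℕ) (hD : ∀ l ∈ D, l ∈ k.smoothNumbers) :
    ∑ l ∈ D, (l : ℝ) ^ (ε - 1) ≤ Real.exp (16 * Real.log k + 8 * (k : ℝ) ^ ε) := by
  have hr : ∀ {p : ℕ}, p.Prime → (p : ℝ) ^ (ε - 1) ≤ 3 / 4 := by
    intro p hp
    have hp2 : (2 : ℝ) ≤ p := by exact_mod_cast hp.two_le
    calc (p : ℝ) ^ (ε - 1) ≤ 2 ^ (ε - 1) :=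
          Real.rpow_le_rpow_of_nonpos (by norm_num) hp2 (by linarith)
      _ ≤ 2 ^ (-(1 / 2) : ℝ) := Real.rpow_le_rpow_of_exponent_le (by norm_num) (by linarith)
      _ ≤ 3 / 4 := by
        rw [Real.rpow_neg (by norm_num), ← Real.sqrt_eq_rpow]
        rw [inv_le_comm₀ (by positivity) (by norm_num)]
        apply Real.le_sqrt_of_sq_le; norm_num
  have hpow : ∀ p n : ℕ, (((p ^ (n + 1) : ℕ) : ℝ)) ^ (ε - 1) =
      (p : ℝ) ^ (ε - 1) * ((p : ℝ) ^ (ε - 1)) ^ n := by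
    intro p n
    push_cast
    rw [← Real.rpow_pow_comm (by positivity), pow_succ']
  have hgeo : ∀ {p : ℕ}, p.Prime → HasSum (fun n : ℕ => (((p ^ (n + 1) : ℕ) : ℝ)) ^ (ε - 1))
      ((p : ℝ) ^ (ε - 1) * (1 - (p : ℝ) ^ (ε - 1))⁻¹) := by
    intro p hp
    simp_rw [hpow]
    exact (hasSum_geometric_of_lt_one (by positivity) (by linarith [hr hp])).mul_left _
  have hb := sum_smooth_le (f := fun l => (l : ℝ) ^ (ε - 1))
    (g := fun p => 4 * (p : ℝ) ^ (ε - 1)) (fun n => by positivity) (by simp)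
    (fun {m n} _ => by push_cast; exact Real.mul_rpow (by positivity) (by positivity))
    (fun hp => (hgeo hp).summable)
    (fun {p} hp => by
      rw [(hgeo hp).tsum_eq, mul_comm]
      gcongr
      rw [inv_le_comm₀ (by linarith [hr hp]) (by norm_num)]
      linarith [hr hp])
    k D hD
  refine hb.trans (Real.exp_le_exp.mpr ?_)
  have hk1 : (1 : ℝ) < k := by exact_mod_cast hk
  have hlk : 0 < Real.log k := Real.log_pos hk1
  have hterm : ∀ p ∈ k.primesBelow, 4 * (p : ℝ) ^ (ε - 1) ≤
      8 * (Real.log p / p) + 4 * ((k : ℝ) ^ ε / Real.log k) * (Real.log p / p) := by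
    intro p hp
    have hp' := Nat.prime_of_mem_primesBelow hp
    have hpk : (p : ℝ) ≤ k := by exact_mod_cast (Nat.lt_of_mem_primesBelow hp).le
    have hp2 : (2 : ℝ) ≤ p := by exact_mod_cast hp'.two_le
    have hp0 : (0 : ℝ) < p := by linarith
    have hlp : 1 / 2 ≤ Real.log p := by
      have := Real.log_le_log (by norm_num) hp2
      linarith [Real.log_two_gt_d9]
    have hlpk := Real.log_le_log hp0 hpk
    -- convexity of `exp` on `[0, ε log k]`
    have hconv : (p : ℝ) ^ ε ≤ 1 + Real.log p / Real.log k * (k : ℝ) ^ ε := by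
      have hθ0 : 0 ≤ Real.log p / Real.log k := by positivity
      have hθ1 : Real.log p / Real.log k ≤ 1 := (div_le_one hlk).mpr hlpk
      have := convexOn_exp.2 (Set.mem_univ (0 : ℝ)) (Set.mem_univ (Real.log k * ε))
        (sub_nonneg.mpr hθ1) hθ0 (by ring)
      simp only [smul_eq_mul, mul_zero, zero_add, Real.exp_zero, mul_one] at this
      rw [Real.rpow_def_of_pos hp0, Real.rpow_def_of_pos (by linarith : (0 : ℝ) < k)]
      have he : Real.log p / Real.log k * (Real.log k * ε) = Real.log p * ε := by
        field_simp
      rw [he] at this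
      linarith
    rw [Real.rpow_sub_one hp0.ne']
    calc 4 * ((p : ℝ) ^ ε / p) ≤ 4 * ((2 * Real.log p + Real.log p / Real.log k * (k : ℝ) ^ ε) / p) := by
          gcongr; linarith
      _ = _ := by ring
  refine (Finset.sum_le_sum hterm).trans ?_
  rw [Finset.sum_add_distrib, ← Finset.mul_sum, ← Finset.mul_sum]
  have h2 := sum_log_div_le k (by omega)
  have h3 : 4 * ((k : ℝ) ^ ε / Real.log k) * ∑ p ∈ k.primesBelow, Real.log p / p ≤
      4 * ((k : ℝ) ^ ε / Real.log k) * (2 * Real.log k) := by gcongr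
  have h4 : 4 * ((k : ℝ) ^ ε / Real.log k) * (2 * Real.log k) = 8 * (k : ℝ) ^ ε := by
    field_simp; ring
  linarith
/-! ### Averages over residue classes in `ZMod N` -/

section Averages
variable {N : ℕ} [NeZero N]

lemma natCast_dvd_intCast_iff {d : ℕ} (hd : d ∣ N) (z : ℤ) :
    (d : ZMod N) ∣ (z : ZMod N) ↔ (d : ℤ) ∣ z := by
  constructor
  · rintro ⟨c, hc⟩
    have h : ((z - d * (c.val : ℤ) : ℤ) : ZMod N) = 0 := by
      push_cast
      rw [ZMod.natCast_zmod_val, hc, sub_self]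
    rw [ZMod.intCast_zmod_eq_zero_iff_dvd] at h
    have h' : (d : ℤ) ∣ z - d * (c.val : ℤ) := (Int.natCast_dvd_natCast.mpr hd).trans h
    exact (dvd_sub_left (dvd_mul_right _ _)).mp h'
  · rintro ⟨c, rfl⟩
    push_cast
    exact dvd_mul_right _ _

lemma natCast_dvd_iff {d : ℕ} (hd : d ∣ N) (z : ZMod N) :
    (d : ZMod N) ∣ z ↔ (d : ℤ) ∣ (z.val : ℤ) := by
  rw [← natCast_dvd_intCast_iff hd]
  simp

/-- Indicator function of the residue class of `a` modulo `d`, viewed in `ZMod N`. It is meant for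
`d ∣ N`, where divisibility by `d` in `ZMod N` is divisibility by `d` of representatives. -/
noncomputable def ind (d : ℕ) (a : ZMod N) (x : ZMod N) : ℝ :=
  if (d : ZMod N) ∣ x - a then 1 else 0

lemma ind_nonneg (d : ℕ) (a x : ZMod N) : 0 ≤ ind d a x := by
  unfold ind; split_ifs <;> norm_num

/-- `f` is invariant under translation by multiples of `q`. -/
def IsPeriodic (q : ℕ) (f : ZMod N → ℝ) : Prop := ∀ x t, f (x + q * t) = f x

/-- The average of `F` over the fibre `x + q * ZMod N`, that is, the conditional expectation of `F`
given the residue modulo `q` (when `q ∣ N`, otherwise modulo `gcd q N`). -/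
noncomputable def fib (q : ℕ) (F : ZMod N → ℝ) (x : ZMod N) : ℝ := 𝔼 t, F (x + q * t)

lemma IsPeriodic.mul {q : ℕ} {f g : ZMod N → ℝ} (hf : IsPeriodic q f) (hg : IsPeriodic q g) :
    IsPeriodic q fun x => f x * g x := fun x t => by simp only [hf x t, hg x t]

lemma IsPeriodic.of_dvd {q r : ℕ} {f : ZMod N → ℝ} (hf : IsPeriodic q f) (h : q ∣ r) :
    IsPeriodic r f := by
  obtain ⟨c, rfl⟩ := h
  intro x t
  rw [Nat.cast_mul, mul_assoc]
  exact hf x _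

lemma dvd_add_mul_sub_iff {d q : ℕ} (h : d ∣ q) (a x t : ZMod N) :
    (d : ZMod N) ∣ x + q * t - a ↔ (d : ZMod N) ∣ x - a := by
  have : x + q * t - a = x - a + q * t := by ring
  rw [this]
  exact dvd_add_left ((Nat.cast_dvd_cast h).mul_right t)

lemma ind_isPeriodic {d q : ℕ} (h : d ∣ q) (a : ZMod N) : IsPeriodic q (ind d a) := by
  intro x t
  simp only [ind, dvd_add_mul_sub_iff h]

lemma fib_isPeriodic (q : ℕ) (F : ZMod N → ℝ) : IsPeriodic q (fib q F) := by
  intro x t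
  unfold fib
  refine Fintype.expect_equiv (Equiv.addLeft t) _ _ fun u => ?_
  simp only [Equiv.coe_addLeft]
  congr 1; ring

/-- The tower property of conditional expectation. -/
lemma expect_mul_fib {q : ℕ} {f : ZMod N → ℝ} (hf : IsPeriodic q f) (F : ZMod N → ℝ) :
    𝔼 x, f x * F x = 𝔼 x, f x * fib q F x := by
  have h1 : ∀ t : ZMod N, 𝔼 x, f x * F (x + q * t) = 𝔼 x, f x * F x := fun t =>
    Fintype.expect_equiv (Equiv.addRight (q * t)) _ _ fun x => by
      simp only [Equiv.coe_addRight, hf x t]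
  unfold fib
  simp_rw [Finset.mul_expect]
  rw [Finset.expect_comm]
  simp_rw [h1]
  rw [Fintype.expect_const]

lemma fib_mono {q : ℕ} {F G : ZMod N → ℝ} (h : ∀ x, F x ≤ G x) (x : ZMod N) :
    fib q F x ≤ fib q G x := Finset.expect_le_expect fun t _ => h _

lemma expect_ind_le {d : ℕ} (hd : d ∣ N) (a : ZMod N) : 𝔼 t, ind d a t ≤ 1 / d := by
  have hd0 : 0 < d := Nat.pos_of_dvd_of_pos hd (NeZero.pos N)
  have hd0' : (0 : ℝ) < d := by exact_mod_cast hd0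
  have h1 : ∀ c : ℕ, 𝔼 t : ZMod N, ind d (a + (c : ZMod N)) t = 𝔼 t, ind d a t := fun c =>
    Fintype.expect_equiv (Equiv.addRight (-(c : ZMod N))) _ _ fun _ => by
      simp only [Equiv.coe_addRight, ind]
      congr 2; ring
  have h2 : ∀ t : ZMod N, ∑ c ∈ range d, ind d (a + (c : ZMod N)) t ≤ 1 := by
    intro t
    simp only [ind]
    rw [Finset.sum_boole]
    have : (filter (fun c : ℕ => (d : ZMod N) ∣ t - (a + (c : ZMod N))) (range d)).card ≤ 1 := by
      refine Finset.card_le_one.mpr fun c hc c' hc' => ?_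
      simp only [mem_filter, mem_range] at hc hc'
      have h3 := dvd_sub hc.2 hc'.2
      have h4 : t - (a + (c : ZMod N)) - (t - (a + (c' : ZMod N))) = (((c' : ℤ) - c : ℤ) : ZMod N) := by
        push_cast; ring
      rw [h4, natCast_dvd_intCast_iff hd] at h3
      have := Int.eq_zero_of_abs_lt_dvd h3 (by rw [abs_lt]; omega)
      omega
    exact_mod_cast this
  have h3 : (d : ℝ) * 𝔼 t, ind d a t ≤ 1 := by
    calc (d : ℝ) * 𝔼 t, ind d a t = ∑ c ∈ range d, 𝔼 t : ZMod N, ind d (a + (c : ZMod N)) t := by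
          simp [h1]
      _ = 𝔼 t : ZMod N, ∑ c ∈ range d, ind d (a + (c : ZMod N)) t := (Finset.expect_sum_comm _ _ _).symm
      _ ≤ 1 := Finset.expect_le univ_nonempty fun t _ => h2 t
  rw [le_div_iff₀ hd0']
  linarith

/-- Chinese remainder theorem: within a fibre modulo `q`, a class modulo a number `r` coprime to `q`
has proportion at most `1 / r`. -/
lemma fib_ind_le {q u r : ℕ} (hu : u ∣ q) (hqr : Nat.Coprime q r) (hr : r ∣ N) (a x : ZMod N) :
    fib q (ind (u * r) a) x ≤ ind u a x * (1 / r) := by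
  by_cases h : (u : ZMod N) ∣ x - a
  · have hb : IsCoprime (q : ℤ) (r : ℤ) := Nat.isCoprime_iff_coprime.mpr hqr
    obtain ⟨v, w, hvw⟩ := hb
    have hvw' : (v : ZMod N) * q + w * r = 1 := by exact_mod_cast congrArg (Int.cast : ℤ → ZMod N) hvw
    rw [ind, if_pos h, one_mul]
    refine le_trans ?_ (expect_ind_le hr (v * (a - x)))
    refine Finset.expect_le_expect fun t _ => ?_
    unfold ind
    by_cases h1 : ((u * r : ℕ) : ZMod N) ∣ x + q * t - a
    · have h2 : (r : ZMod N) ∣ x + q * t - a :=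
        (Nat.cast_dvd_cast (dvd_mul_left r u)).trans h1
      have h3 : (r : ZMod N) ∣ t - v * (a - x) := by
        have : t - v * (a - x) = v * (x + q * t - a) + r * (w * t) := by
          linear_combination (-t) * hvw'
        rw [this]
        exact dvd_add (h2.mul_left _) (dvd_mul_right _ _)
      rw [if_pos h1, if_pos h3]
    · rw [if_neg h1]; split_ifs <;> norm_num
  · rw [ind, if_neg h, zero_mul]
    refine le_of_eq (Finset.expect_eq_zero fun t _ => ?_)
    unfold ind
    rw [if_neg]
    intro h1
    exact h ((dvd_add_mul_sub_iff hu a x t).mp ((Nat.cast_dvd_cast (dvd_mul_right u r)).trans h1))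

/-- Two residue classes meet in a class modulo the lcm, or not at all. -/
lemma ind_mul_ind_le {u v : ℕ} (hu : u ∣ N) (hv : v ∣ N) (a b : ZMod N) :
    ∃ c : ZMod N, ∀ x, ind u a x * ind v b x ≤ ind (Nat.lcm u v) c x := by
  by_cases h : ∃ c : ZMod N, (u : ZMod N) ∣ c - a ∧ (v : ZMod N) ∣ c - b
  · obtain ⟨c, hca, hcb⟩ := h
    refine ⟨c, fun x => ?_⟩
    unfold ind
    by_cases h1 : (u : ZMod N) ∣ x - a
    · by_cases h2 : (v : ZMod N) ∣ x - b
      · have h3 : (u : ZMod N) ∣ x - c := by simpa using dvd_sub h1 hca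
        have h4 : (v : ZMod N) ∣ x - c := by simpa using dvd_sub h2 hcb
        rw [natCast_dvd_iff hu, Int.natCast_dvd_natCast] at h3
        rw [natCast_dvd_iff hv, Int.natCast_dvd_natCast] at h4
        have h5 : ((Nat.lcm u v : ℕ) : ZMod N) ∣ x - c := by
          rw [natCast_dvd_iff (Nat.lcm_dvd hu hv), Int.natCast_dvd_natCast]
          exact Nat.lcm_dvd h3 h4
        rw [if_pos h1, if_pos h2, if_pos h5, one_mul]
      · rw [if_neg h2, mul_zero]; split_ifs <;> norm_num
    · rw [if_neg h1, zero_mul]; split_ifs <;> norm_num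
  · refine ⟨0, fun x => ?_⟩
    have : ind u a x * ind v b x = 0 := by
      unfold ind
      by_cases h1 : (u : ZMod N) ∣ x - a
      · have h2 : ¬ (v : ZMod N) ∣ x - b := fun h2 => h ⟨x, h1, h2⟩
        rw [if_neg h2, mul_zero]
      · rw [if_neg h1, zero_mul]
    rw [this]
    exact ind_nonneg _ _ _

/-- The factor by which the density is multiplied in order to avoid the set with indicator `b`. On a
fibre modulo `q` on which `b` has average `α`: if `α < 1 / 2`, the set is removed and its
complement rescaled by `1 / (1 - α)`; otherwise the factor is `2` off the set and
`2 - 1 / α` on it. -/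
noncomputable def distortion (q : ℕ) (b : ZMod N → ℝ) (x : ZMod N) : ℝ :=
  if fib q b x < 1 / 2 then (1 - b x) / (1 - fib q b x) else 2 - b x / fib q b x

section
variable {b : ZMod N → ℝ}

lemma distortion_nonneg (hb : ∀ x, b x = 0 ∨ b x = 1) (q : ℕ) (x : ZMod N) :
    0 ≤ distortion q b x := by
  unfold distortion
  split_ifs with h
  · apply div_nonneg _ (by linarith)
    rcases hb x with h' | h' <;> rw [h'] <;> norm_num
  · have h1 : b x / fib q b x ≤ 2 := by
      rw [div_le_iff₀ (by linarith)]
      rcases hb x with h' | h' <;> rw [h'] <;> linarith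
    linarith

lemma distortion_le_two (hb : ∀ x, b x = 0 ∨ b x = 1) (q : ℕ) (x : ZMod N) :
    distortion q b x ≤ 2 := by
  unfold distortion
  split_ifs with h
  · rw [div_le_iff₀ (by linarith)]
    rcases hb x with h' | h' <;> rw [h'] <;> linarith
  · have h1 : 0 ≤ b x / fib q b x := by
      apply div_nonneg _ (by linarith)
      rcases hb x with h' | h' <;> rw [h'] <;> norm_num
    linarith

/-- The distortion redistributes mass only inside the fibres modulo `q`. -/
lemma fib_distortion (q : ℕ) (x : ZMod N) : fib q (distortion q b) x = 1 := by
  have hper := fib_isPeriodic q b x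
  have hα : 𝔼 t, b (x + q * t) = fib q b x := rfl
  by_cases h : fib q b x < 1 / 2
  · have : ∀ t, distortion q b (x + q * t) = (1 - b (x + q * t)) / (1 - fib q b x) := fun t => by
      rw [distortion, hper t, if_pos h]
    rw [fib]
    simp_rw [this]
    rw [← Finset.expect_div, Finset.expect_sub_distrib, Fintype.expect_const, hα,
      div_self (by linarith)]
  · have : ∀ t, distortion q b (x + q * t) = 2 - b (x + q * t) / fib q b x := fun t => by
      rw [distortion, hper t, if_neg h]
    rw [fib]
    simp_rw [this]
    rw [Finset.expect_sub_distrib, ← Finset.expect_div, Fintype.expect_const, hα,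
      div_self (by linarith)]
    norm_num

/-- After distortion the set has proportion `0` or `2α - 1` in a fibre, in both cases at most
`α²`. -/
lemma fib_distortion_mul_le (hb : ∀ x, b x = 0 ∨ b x = 1) (q : ℕ) (x : ZMod N) :
    fib q (fun x => distortion q b x * b x) x ≤ fib q b x ^ 2 := by
  have hper := fib_isPeriodic q b x
  have hα : 𝔼 t, b (x + q * t) = fib q b x := rfl
  by_cases h : fib q b x < 1 / 2
  · have : ∀ t, distortion q b (x + q * t) * b (x + q * t) = 0 := fun t => by
      rw [distortion, hper t, if_pos h]
      rcases hb (x + q * t) with h' | h' <;> rw [h'] <;> simp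
    rw [fib]
    simp_rw [this]
    simp only [expect_const_zero]
    positivity
  · have : ∀ t, distortion q b (x + q * t) * b (x + q * t) =
        (2 - 1 / fib q b x) * b (x + q * t) := fun t => by
      rw [distortion, hper t, if_neg h]
      rcases hb (x + q * t) with h' | h' <;> rw [h'] <;> simp
    rw [fib]
    simp_rw [this]
    rw [← Finset.mul_expect, hα, sub_mul, one_div_mul_cancel (by linarith)]
    nlinarith [sq_nonneg (fib q b x - 1)]

end

lemma distortion_isPeriodic {q r : ℕ} (hqr : q ∣ r) {b : ZMod N → ℝ} (hb : IsPeriodic r b) :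
    IsPeriodic r (distortion q b) := by
  intro x t
  unfold distortion
  rw [hb x t, ((fib_isPeriodic q b).of_dvd hqr) x t]

end Averages

/-! ### Stages of the construction -/

section Stages

/-- A modulus that is divisible by exactly the primes below `k`, to a high enough power to be a
multiple of every `k`-smooth divisor of `N`. -/
def stageModulus (N k : ℕ) : ℕ := (k - 1).factorial ^ N

lemma stageModulus_dvd (N k : ℕ) : stageModulus N k ∣ stageModulus N (k + 1) :=
  pow_dvd_pow_of_dvd (Nat.factorial_dvd_factorial (by omega)) _

lemma stageModulus_coprime (N : ℕ) {p : ℕ} (hp : p.Prime) (e : ℕ) :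
    Nat.Coprime (stageModulus N p) (p ^ e) := by
  refine Nat.Coprime.pow _ _ (Nat.Coprime.symm ((Nat.Prime.coprime_iff_not_dvd hp).mpr ?_))
  rw [hp.dvd_factorial]
  have := hp.pos
  omega

lemma dvd_stageModulus {N k d : ℕ} (hN : 0 < N) (hd : d ∣ N) (hk : d ∈ k.smoothNumbers) :
    d ∣ stageModulus N k := by
  have hd0 : d ≠ 0 := Nat.ne_zero_of_mem_smoothNumbers hk
  rw [stageModulus, ← Nat.factorization_le_iff_dvd hd0 (pow_ne_zero _ (Nat.factorial_ne_zero _)),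
    Nat.factorization_pow]
  intro p
  simp only [Finsupp.smul_apply, smul_eq_mul]
  by_cases hp : p ∈ d.primeFactors
  · have hp' := Nat.prime_of_mem_primeFactors hp
    have hpk := Nat.mem_smoothNumbers'.mp hk p hp' (Nat.dvd_of_mem_primeFactors hp)
    have h1 : 1 ≤ (k - 1).factorial.factorization p :=
      (hp'.dvd_iff_one_le_factorization (Nat.factorial_ne_zero _)).mp
        (hp'.dvd_factorial.mpr (by omega))
    have h2 : d.factorization p < d := Nat.factorization_lt p hd0
    have h3 := Nat.le_of_dvd hN hd
    nlinarith
  · rw [Finsupp.notMem_support_iff.mp (by simpa using hp)]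
    exact Nat.zero_le _

/-- The divisors of `N` all of whose prime factors are less than `k`. -/
def smoothDivisors (N k : ℕ) : Finset ℕ := N.divisors.filter (· ∈ k.smoothNumbers)

lemma mem_smoothDivisors {N k d : ℕ} (hN : 0 < N) :
    d ∈ smoothDivisors N k ↔ d ∣ N ∧ d ∈ k.smoothNumbers := by
  simp [smoothDivisors, hN.ne']

lemma exists_eq_mul_pow {N p d : ℕ} (hN : 0 < N) (hp : p.Prime) (hd : d ∣ N)
    (hs : d ∈ (p + 1).smoothNumbers) :
    ∃ u ∈ smoothDivisors N p, ∃ e ≤ N, d = u * p ^ e := by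
  have hd0 : d ≠ 0 := Nat.ne_zero_of_mem_smoothNumbers hs
  obtain ⟨e, u, hu, he⟩ := Nat.exists_eq_pow_mul_and_not_dvd hd0 p hp.ne_one
  have hud : u ∣ d := ⟨p ^ e, by rw [he, mul_comm]⟩
  refine ⟨u, (mem_smoothDivisors hN).mpr ⟨hud.trans hd, ?_⟩, e, ?_, by rw [he, mul_comm]⟩
  · rw [Nat.mem_smoothNumbers']
    intro r hr hru
    have h1 := Nat.mem_smoothNumbers'.mp hs r hr (hru.trans hud)
    have h2 : r ≠ p := fun h => hu (h ▸ hru)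
    omega
  · have h1 : p ^ e ≤ N := Nat.le_of_dvd hN ((Dvd.intro _ he.symm).trans hd)
    exact (Nat.lt_pow_self hp.one_lt).le.trans h1

lemma divisorDensity_nonneg (l : ℕ) : 0 ≤ divisorDensity l := by
  unfold divisorDensity; positivity

/-- Group the pairs `(u, v)` by `l = lcm u v`; both entries are divisors of `l`. -/
lemma sum_lcm_le {N k : ℕ} (hN : 0 < N) :
    ∑ u ∈ smoothDivisors N k, ∑ v ∈ smoothDivisors N k, divisorDensity (Nat.lcm u v) ≤
      ∑ l ∈ smoothDivisors N k, (l.divisors.card : ℝ) ^ 2 * divisorDensity l := by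
  set D := smoothDivisors N k
  have hmaps : ∀ z ∈ D ×ˢ D, Nat.lcm z.1 z.2 ∈ D := by
    intro z hz
    obtain ⟨h1, h2⟩ := mem_product.mp hz
    rw [mem_smoothDivisors hN] at h1 h2 ⊢
    exact ⟨Nat.lcm_dvd h1.1 h2.1, Nat.mem_smoothNumbers_of_dvd
      (Nat.mul_mem_smoothNumbers h1.2 h2.2) (Nat.lcm_dvd_mul _ _)⟩
  rw [← Finset.sum_product', ← Finset.sum_fiberwise_of_maps_to hmaps]
  refine Finset.sum_le_sum fun l hl => ?_
  have hl0 : l ≠ 0 := Nat.ne_zero_of_mem_smoothNumbers ((mem_smoothDivisors hN).mp hl).2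
  have h1 : ∑ z ∈ D ×ˢ D with Nat.lcm z.1 z.2 = l, divisorDensity (Nat.lcm z.1 z.2) =
      ((D ×ˢ D).filter fun z => Nat.lcm z.1 z.2 = l).card * divisorDensity l := by
    rw [← nsmul_eq_mul, ← Finset.sum_const]
    exact Finset.sum_congr rfl fun z hz => by rw [(mem_filter.mp hz).2]
  have h2 : ((D ×ˢ D).filter fun z => Nat.lcm z.1 z.2 = l).card ≤ l.divisors.card ^ 2 := by
    rw [sq, ← card_product]
    refine card_le_card fun z hz => ?_
    obtain ⟨-, rfl⟩ := mem_filter.mp hz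
    exact mem_product.mpr ⟨Nat.mem_divisors.mpr ⟨Nat.dvd_lcm_left _ _, hl0⟩,
      Nat.mem_divisors.mpr ⟨Nat.dvd_lcm_right _ _, hl0⟩⟩
  rw [h1]
  exact mul_le_mul_of_nonneg_right (by exact_mod_cast h2) (divisorDensity_nonneg l)

/-- A sum over indices grouped by modulus, at most `s` indices for each modulus. -/
lemma sum_sigma_le {ι κ : Type*} (T : Finset ι) (I : ι → Finset κ) (s : ℕ)
    (hI : ∀ t, (I t).card ≤ s) (h : ι → ℝ) (h0 : ∀ t, 0 ≤ h t) :
    ∑ z ∈ T.sigma I, h z.1 ≤ s * ∑ t ∈ T, h t := by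
  rw [Finset.sum_sigma, Finset.mul_sum]
  refine Finset.sum_le_sum fun t _ => ?_
  simp only [Finset.sum_const, nsmul_eq_mul]
  exact mul_le_mul_of_nonneg_right (by exact_mod_cast hI t) (h0 t)

lemma sum_product_product (D E : Finset ℕ) (g : ℕ → ℝ) (h : ℕ → ℕ → ℝ) :
    ∑ t ∈ D ×ˢ E, ∑ t' ∈ D ×ˢ E, g t.2 * g t'.2 * h t.1 t'.1 =
      (∑ e ∈ E, g e) ^ 2 * ∑ u ∈ D, ∑ v ∈ D, h u v := by
  rw [Finset.sum_product, Finset.mul_sum]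
  refine Finset.sum_congr rfl fun u _ => ?_
  simp only [Finset.sum_product]
  rw [Finset.sum_comm, Finset.mul_sum]
  refine Finset.sum_congr rfl fun v _ => ?_
  rw [sq, Finset.sum_mul_sum, Finset.sum_mul]
  exact Finset.sum_congr rfl fun e _ => (Finset.sum_mul _ _ _).symm

lemma sum_pow_le {p : ℕ} (hp : 2 ≤ p) (M : ℕ) :
    ∑ e ∈ Icc 1 M, 1 / (p : ℝ) ^ e ≤ 2 / p := by
  have hp2 : (2 : ℝ) ≤ p := by exact_mod_cast hp
  have h : ∀ M : ℕ, ∑ e ∈ Icc 1 M, 1 / (p : ℝ) ^ e ≤ 2 / p * (1 - 1 / (p : ℝ) ^ M) := by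
    intro M
    induction M with
    | zero => simp
    | succ M ih =>
      rw [Finset.sum_Icc_succ_top (by omega)]
      have h1 : (0 : ℝ) < 1 / (p : ℝ) ^ (M + 1) := by positivity
      have h2 : 1 / (p : ℝ) ^ M = p * (1 / (p : ℝ) ^ (M + 1)) := by
        rw [pow_succ]; field_simp
      have h3 : 2 / (p : ℝ) * (p * (1 / (p : ℝ) ^ (M + 1))) = 2 * (1 / (p : ℝ) ^ (M + 1)) := by
        field_simp
      have h4 : 2 / (p : ℝ) ≤ 1 := by rw [div_le_one (by linarith)]; exact hp2
      rw [h2] at ih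
      nlinarith
  refine (h M).trans (mul_le_of_le_one_right (by positivity) ?_)
  have : 0 ≤ 1 / (p : ℝ) ^ M := by positivity
  linarith

variable {N : ℕ} [NeZero N] {n : ℕ}

/-- Indicator of the union of the progressions `a i + m i ℤ` with `k`-smooth modulus. -/
noncomputable def covered (a : Fin n → ZMod N) (m : Fin n → ℕ) (k : ℕ) (x : ZMod N) : ℝ :=
  if ∃ i, m i ∈ k.smoothNumbers ∧ (m i : ZMod N) ∣ x - a i then 1 else 0

/-- Indicator of the union of the progressions whose modulus is `(p + 1)`-smooth and divisible by
`p`. -/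
noncomputable def newlyCovered (a : Fin n → ZMod N) (m : Fin n → ℕ) (p : ℕ) (x : ZMod N) : ℝ :=
  if ∃ i, m i ∈ (p + 1).smoothNumbers ∧ p ∣ m i ∧ (m i : ZMod N) ∣ x - a i then 1 else 0

/-- `w` is a density on `ZMod N` with respect to the uniform probability measure that depends only on
primes below `k`, gives mass at most `τ(d) / d` to each class modulo a `k`-smooth `d`, and gives mass
at most `ε` to the progressions with `k`-smooth modulus. -/
structure IsStage (a : Fin n → ZMod N) (m : Fin n → ℕ) (k : ℕ) (w : ZMod N → ℝ) (ε : ℝ) :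
    Prop where
  nonneg : ∀ x, 0 ≤ w x
  mean : 𝔼 x, w x = 1
  periodic : IsPeriodic (stageModulus N k) w
  density : ∀ d, d ∣ N → d ∈ k.smoothNumbers → ∀ c, 𝔼 x, w x * ind d c x ≤ divisorDensity d
  covered_le : 𝔼 x, w x * covered a m k x ≤ ε

variable {a : Fin n → ZMod N} {m : Fin n → ℕ} {s : ℕ}

lemma newlyCovered_isPeriodic (hm : ∀ i, m i ∣ N) (p : ℕ) :
    IsPeriodic (stageModulus N (p + 1)) (newlyCovered a m p) := by
  intro x t
  unfold newlyCovered
  congr 1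
  refine propext (exists_congr fun i => and_congr_right fun h => and_congr_right fun _ => ?_)
  exact dvd_add_mul_sub_iff (dvd_stageModulus (NeZero.pos N) (hm i) h) _ _ _

lemma covered_isPeriodic (hm : ∀ i, m i ∣ N) (k : ℕ) :
    IsPeriodic (stageModulus N k) (covered a m k) := by
  intro x t
  unfold covered
  congr 1
  refine propext (exists_congr fun i => and_congr_right fun h => ?_)
  exact dvd_add_mul_sub_iff (dvd_stageModulus (NeZero.pos N) (hm i) h) _ _ _

/-- Second moment of the proportion of newly covered points. The moduli involved are `u * p ^ e` with
`u` `p`-smooth and `e ≥ 1`; such a progression has proportion at most `p ^ (-e)` in the fibres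
inside its class modulo `u`, and none elsewhere. -/
lemma second_moment_le (hm : ∀ i, m i ∣ N)
    (hs : ∀ m₀ : ℕ, (univ.filter fun i : Fin n => m i = m₀).card ≤ s)
    {p : ℕ} (hp : p.Prime) {w : ZMod N → ℝ} {ε : ℝ} (hw : IsStage a m p w ε) :
    𝔼 x, w x * fib (stageModulus N p) (newlyCovered a m p) x ^ 2 ≤
      (s : ℝ) ^ 2 * (2 / p) ^ 2 * ∑ l ∈ smoothDivisors N p,
        (l.divisors.card : ℝ) ^ 2 * divisorDensity l := by
  have hN : 0 < N := NeZero.pos N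
  set Q := stageModulus N p with hQ
  set D := smoothDivisors N p with hD
  set T : Finset (ℕ × ℕ) := D ×ˢ Icc 1 N with hT
  set I : ℕ × ℕ → Finset (Fin n) := fun t => univ.filter fun i => m i = t.1 * p ^ t.2 with hI
  set Z := T.sigma I with hZ
  have hDd : ∀ u ∈ D, u ∣ N ∧ u ∈ p.smoothNumbers := fun u hu => (mem_smoothDivisors hN).mp hu
  have hZd : ∀ z ∈ Z, z.1.1 ∈ D ∧ m z.2 = z.1.1 * p ^ z.1.2 := by
    intro z hz
    obtain ⟨h1, h2⟩ := mem_sigma.mp hz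
    exact ⟨(mem_product.mp h1).1, (mem_filter.mp h2).2⟩
  have hb : ∀ x, newlyCovered a m p x ≤ ∑ z ∈ Z, ind (z.1.1 * p ^ z.1.2) (a z.2) x := by
    intro x
    unfold newlyCovered
    split_ifs with h
    · obtain ⟨i, h1, h2, h3⟩ := h
      obtain ⟨u, hu, e, he, hue⟩ := exists_eq_mul_pow hN hp (hm i) h1
      have he0 : 1 ≤ e := by
        by_contra h0
        have : e = 0 := by omega
        subst this
        rw [pow_zero, mul_one] at hue
        rw [hue] at h2
        exact lt_irrefl p (Nat.mem_smoothNumbers'.mp (hDd u hu).2 p hp h2)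
      have hz : (⟨(u, e), i⟩ : Σ _ : ℕ × ℕ, Fin n) ∈ Z :=
        mem_sigma.mpr ⟨mem_product.mpr ⟨hu, mem_Icc.mpr ⟨he0, he⟩⟩,
          mem_filter.mpr ⟨mem_univ _, hue⟩⟩
      refine le_trans ?_ (Finset.single_le_sum (f := fun z : Σ _ : ℕ × ℕ, Fin n =>
        ind (z.1.1 * p ^ z.1.2) (a z.2) x) (fun z _ => ind_nonneg _ _ _) hz)
      simp only [ind]
      rw [← hue, if_pos h3]
    · exact Finset.sum_nonneg fun z _ => ind_nonneg _ _ _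
  have hα : ∀ x, fib Q (newlyCovered a m p) x ≤
      ∑ z ∈ Z, ind z.1.1 (a z.2) x * (1 / (p : ℝ) ^ z.1.2) := by
    intro x
    refine (fib_mono hb x).trans ?_
    unfold fib
    rw [Finset.expect_sum_comm]
    refine Finset.sum_le_sum fun z hz => ?_
    obtain ⟨h1, h2⟩ := hZd z hz
    have h3 := fib_ind_le (N := N) (dvd_stageModulus hN (hDd _ h1).1 (hDd _ h1).2)
      (stageModulus_coprime N hp z.1.2)
      ((Dvd.intro_left _ h2.symm).trans (hm z.2)) (a z.2) x
    push_cast at h3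
    exact h3
  have hα0 : ∀ x, 0 ≤ fib Q (newlyCovered a m p) x := fun x =>
    Finset.expect_nonneg fun t _ => by unfold newlyCovered; split_ifs <;> norm_num
  have hpair : ∀ z ∈ Z, ∀ z' ∈ Z, 𝔼 x, w x * (ind z.1.1 (a z.2) x * ind z'.1.1 (a z'.2) x) ≤
      divisorDensity (Nat.lcm z.1.1 z'.1.1) := by
    intro z hz z' hz'
    have h1 := hDd _ (hZd z hz).1
    have h2 := hDd _ (hZd z' hz').1
    obtain ⟨c, hc⟩ := ind_mul_ind_le h1.1 h2.1 (a z.2) (a z'.2)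
    refine le_trans (Finset.expect_le_expect fun x _ =>
      mul_le_mul_of_nonneg_left (hc x) (hw.nonneg x)) ?_
    exact hw.density _ (Nat.lcm_dvd h1.1 h2.1) (Nat.mem_smoothNumbers_of_dvd
      (Nat.mul_mem_smoothNumbers h1.2 h2.2) (Nat.lcm_dvd_mul _ _)) c
  have hp0 : (0 : ℝ) < p := by exact_mod_cast hp.pos
  calc 𝔼 x, w x * fib Q (newlyCovered a m p) x ^ 2
      ≤ 𝔼 x, w x * (∑ z ∈ Z, ind z.1.1 (a z.2) x * (1 / (p : ℝ) ^ z.1.2)) ^ 2 :=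
        Finset.expect_le_expect fun x _ => mul_le_mul_of_nonneg_left
          (pow_le_pow_left₀ (hα0 x) (hα x) 2) (hw.nonneg x)
    _ = 𝔼 x, ∑ z ∈ Z, ∑ z' ∈ Z, (1 / (p : ℝ) ^ z.1.2) * (1 / (p : ℝ) ^ z'.1.2) *
          (w x * (ind z.1.1 (a z.2) x * ind z'.1.1 (a z'.2) x)) := by
        refine Finset.expect_congr rfl fun x _ => ?_
        rw [sq, Finset.sum_mul_sum, Finset.mul_sum]
        refine Finset.sum_congr rfl fun z _ => ?_
        rw [Finset.mul_sum]
        exact Finset.sum_congr rfl fun z' _ => by ring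
    _ = ∑ z ∈ Z, ∑ z' ∈ Z, (1 / (p : ℝ) ^ z.1.2) * (1 / (p : ℝ) ^ z'.1.2) *
          𝔼 x, w x * (ind z.1.1 (a z.2) x * ind z'.1.1 (a z'.2) x) := by
        rw [Finset.expect_sum_comm]
        refine Finset.sum_congr rfl fun z _ => ?_
        rw [Finset.expect_sum_comm]
        exact Finset.sum_congr rfl fun z' _ => by rw [Finset.mul_expect]
    _ ≤ ∑ z ∈ Z, ∑ z' ∈ Z, (1 / (p : ℝ) ^ z.1.2) * (1 / (p : ℝ) ^ z'.1.2) *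
          divisorDensity (Nat.lcm z.1.1 z'.1.1) :=
        Finset.sum_le_sum fun z hz => Finset.sum_le_sum fun z' hz' =>
          mul_le_mul_of_nonneg_left (hpair z hz z' hz') (by positivity)
    _ ≤ ∑ z ∈ Z, s * ∑ t' ∈ T, (1 / (p : ℝ) ^ z.1.2) * (1 / (p : ℝ) ^ t'.2) *
          divisorDensity (Nat.lcm z.1.1 t'.1) :=
        Finset.sum_le_sum fun z _ => sum_sigma_le T I s (fun t => hs _)
          (fun t' => (1 / (p : ℝ) ^ z.1.2) * (1 / (p : ℝ) ^ t'.2) *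
            divisorDensity (Nat.lcm z.1.1 t'.1))
          (fun t' => mul_nonneg (by positivity) (divisorDensity_nonneg _))
    _ ≤ s * ∑ t ∈ T, s * ∑ t' ∈ T, (1 / (p : ℝ) ^ t.2) * (1 / (p : ℝ) ^ t'.2) *
          divisorDensity (Nat.lcm t.1 t'.1) :=
        sum_sigma_le T I s (fun t => hs _)
          (fun t => s * ∑ t' ∈ T, (1 / (p : ℝ) ^ t.2) * (1 / (p : ℝ) ^ t'.2) *
            divisorDensity (Nat.lcm t.1 t'.1))
          (fun t => mul_nonneg (by positivity) (Finset.sum_nonneg fun t' _ =>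
            mul_nonneg (by positivity) (divisorDensity_nonneg _)))
    _ = (s : ℝ) ^ 2 * (∑ e ∈ Icc 1 N, 1 / (p : ℝ) ^ e) ^ 2 *
          ∑ u ∈ D, ∑ v ∈ D, divisorDensity (Nat.lcm u v) := by
        rw [← Finset.mul_sum, hT, sum_product_product D (Icc 1 N) (fun e => 1 / (p : ℝ) ^ e)
          fun u v => divisorDensity (Nat.lcm u v)]
        ring
    _ ≤ (s : ℝ) ^ 2 * (2 / p) ^ 2 * ∑ l ∈ D, (l.divisors.card : ℝ) ^ 2 * divisorDensity l := by
        have h1 := sum_pow_le hp.two_le N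
        have h2 := sum_lcm_le (k := p) hN
        have h3 : 0 ≤ ∑ e ∈ Icc 1 N, 1 / (p : ℝ) ^ e :=
          Finset.sum_nonneg fun _ _ => by positivity
        have h4 : 0 ≤ ∑ u ∈ D, ∑ v ∈ D, divisorDensity (Nat.lcm u v) :=
          Finset.sum_nonneg fun _ _ => Finset.sum_nonneg fun _ _ => divisorDensity_nonneg _
        gcongr

/-- One step of the construction. If `k` is not prime the same density works, since `k`- and
`(k + 1)`-smooth numbers agree; if `k` is prime the density is multiplied by the distortion. -/
lemma IsStage.succ (hm : ∀ i, m i ∣ N)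
    (hs : ∀ m₀ : ℕ, (univ.filter fun i : Fin n => m i = m₀).card ≤ s)
    {C : ℝ} (hC0 : 0 < C)
    (hC : ∀ (k : ℕ), 1 ≤ k → ∀ D : Finset ℕ, (∀ l ∈ D, l ∈ k.smoothNumbers) →
      ∑ l ∈ D, (l.divisors.card : ℝ) ^ 2 * divisorDensity l ≤ C * √k)
    {k : ℕ} {w : ZMod N → ℝ} {ε : ℝ} (hw : IsStage a m k w ε) :
    ∃ w', IsStage a m (k + 1) w' (ε + (s : ℝ) ^ 2 * (2 / k) ^ 2 * (C * √k)) := by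
  have hN : 0 < N := NeZero.pos N
  by_cases hk : k.Prime
  swap
  · refine ⟨w, hw.nonneg, hw.mean, hw.periodic.of_dvd (stageModulus_dvd N k), ?_, ?_⟩
    · rw [Nat.smoothNumbers_succ hk]; exact hw.density
    · have h1 : covered a m (k + 1) = covered a m k := by
        funext x; simp only [covered, Nat.smoothNumbers_succ hk]
      rw [h1]
      exact hw.covered_le.trans (le_add_of_nonneg_right (by positivity))
  set Q := stageModulus N k with hQ
  set b := newlyCovered a m k with hb
  have hb01 : ∀ x, b x = 0 ∨ b x = 1 := fun x => by
    rw [hb]; unfold newlyCovered; split_ifs <;> simp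
  have hQd : Q ∣ stageModulus N (k + 1) := stageModulus_dvd N k
  -- Averages of `Q`-periodic functions do not change.
  have hkey : ∀ f : ZMod N → ℝ, IsPeriodic Q f →
      𝔼 x, w x * distortion Q b x * f x = 𝔼 x, w x * f x := by
    intro f hf
    have h1 := expect_mul_fib (q := Q) (hw.periodic.mul hf) (distortion Q b)
    simp only [fib_distortion, mul_one] at h1
    rw [← h1]
    exact Finset.expect_congr rfl fun x _ => by ring
  refine ⟨fun x => w x * distortion Q b x, fun x => mul_nonneg (hw.nonneg x)
    (distortion_nonneg hb01 Q x), ?_, ?_, ?_, ?_⟩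
  · have := hkey (fun _ => 1) (fun _ _ => rfl)
    simpa only [mul_one, hw.mean] using this
  · exact (hw.periodic.of_dvd hQd).mul
      (distortion_isPeriodic hQd (newlyCovered_isPeriodic hm k))
  · intro d hd hdk c
    obtain ⟨u, hu, e, -, hue⟩ := exists_eq_mul_pow hN hk hd hdk
    obtain ⟨huN, huk⟩ := (mem_smoothDivisors hN).mp hu
    have huQ : u ∣ Q := dvd_stageModulus hN huN huk
    rcases Nat.eq_zero_or_pos e with he | he
    · have hdu : d = u := by rw [hue, he, pow_zero, mul_one]
      subst hdu
      rw [hkey _ (ind_isPeriodic huQ c)]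
      exact hw.density _ huN huk c
    · have hcop : Nat.Coprime u (k ^ e) :=
        Nat.Coprime.pow_right _ (hk.smoothNumbers_coprime huk).symm
      have hk0 : (0 : ℝ) < k := by exact_mod_cast hk.pos
      calc 𝔼 x, w x * distortion Q b x * ind d c x
          ≤ 𝔼 x, 2 * (w x * ind d c x) := by
            refine Finset.expect_le_expect fun x _ => ?_
            have h1 := distortion_le_two hb01 Q x
            have h2 := mul_nonneg (hw.nonneg x) (ind_nonneg d c x)
            nlinarith
        _ = 2 * 𝔼 x, w x * fib Q (ind d c) x := by
            rw [← Finset.mul_expect, expect_mul_fib (q := Q) hw.periodic]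
        _ ≤ 2 * 𝔼 x, w x * (ind u c x * (1 / ((k ^ e : ℕ) : ℝ))) := by
            refine mul_le_mul_of_nonneg_left (Finset.expect_le_expect fun x _ => ?_) (by norm_num)
            refine mul_le_mul_of_nonneg_left ?_ (hw.nonneg x)
            rw [hue]
            exact fib_ind_le huQ (stageModulus_coprime N hk e)
              ((Dvd.intro_left _ hue.symm).trans hd) c x
        _ = 2 * (1 / ((k ^ e : ℕ) : ℝ)) * 𝔼 x, w x * ind u c x := by
            rw [mul_assoc]
            congr 1
            rw [Finset.mul_expect]
            exact Finset.expect_congr rfl fun x _ => by ring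
        _ ≤ 2 * (1 / ((k ^ e : ℕ) : ℝ)) * divisorDensity u :=
            mul_le_mul_of_nonneg_left (hw.density u huN huk c) (by positivity)
        _ ≤ divisorDensity d := by
            rw [hue, divisorDensity, divisorDensity, hcop.card_divisors_mul,
              Nat.divisors_prime_pow hk]
            simp only [card_map, card_range]
            have he1 : (2 : ℝ) ≤ e + 1 := by
              have : (1 : ℝ) ≤ e := by exact_mod_cast he
              linarith
            push_cast
            have h5 : (2 : ℝ) * (1 / (k : ℝ) ^ e) * (u.divisors.card / u) =
                (u.divisors.card * 2) / (u * (k : ℝ) ^ e) := by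
              rw [mul_one_div, div_mul_div_comm]; ring
            rw [h5]
            gcongr
  · have hsplit : ∀ x, covered a m (k + 1) x ≤ covered a m k x + b x := by
      intro x
      have hc0 : 0 ≤ covered a m k x := by unfold covered; split_ifs <;> norm_num
      have hb0 : 0 ≤ b x := by rcases hb01 x with h | h <;> rw [h]; norm_num
      by_cases h : ∃ i, m i ∈ (k + 1).smoothNumbers ∧ (m i : ZMod N) ∣ x - a i
      · obtain ⟨i, h1, h2⟩ := h
        have hle : covered a m (k + 1) x ≤ 1 := by unfold covered; split_ifs <;> norm_num
        by_cases h3 : k ∣ m i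
        · have : b x = 1 := by
            rw [hb, newlyCovered, if_pos ⟨i, h1, h3, h2⟩]
          linarith
        · have h4 : m i ∈ k.smoothNumbers := by
            rw [Nat.mem_smoothNumbers'] at h1 ⊢
            intro r hr hrm
            have h5 := h1 r hr hrm
            have h6 : r ≠ k := fun h => h3 (h ▸ hrm)
            omega
          have : covered a m k x = 1 := by
            rw [covered, if_pos ⟨i, h4, h2⟩]
          linarith
      · rw [covered, if_neg h]
        linarith
    calc 𝔼 x, w x * distortion Q b x * covered a m (k + 1) x
        ≤ 𝔼 x, (w x * distortion Q b x * covered a m k x + w x * (distortion Q b x * b x)) := by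
          refine Finset.expect_le_expect fun x _ => ?_
          have := mul_le_mul_of_nonneg_left (hsplit x)
            (mul_nonneg (hw.nonneg x) (distortion_nonneg hb01 Q x))
          linarith
      _ = 𝔼 x, w x * covered a m k x +
            𝔼 x, w x * fib Q (fun x => distortion Q b x * b x) x := by
          rw [Finset.expect_add_distrib, hkey _ (covered_isPeriodic hm k),
            expect_mul_fib (q := Q) hw.periodic fun x => distortion Q b x * b x]
      _ ≤ ε + 𝔼 x, w x * fib Q b x ^ 2 :=
          add_le_add hw.covered_le (Finset.expect_le_expect fun x _ =>
            mul_le_mul_of_nonneg_left (fib_distortion_mul_le hb01 Q x) (hw.nonneg x))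
      _ ≤ _ := by
          refine add_le_add le_rfl ((second_moment_le hm hs hk hw).trans ?_)
          refine mul_le_mul_of_nonneg_left ?_ (by positivity)
          exact hC k hk.one_le _ fun l hl => ((mem_smoothDivisors hN).mp hl).2

end Stages

/-! ### Accumulated loss -/

section Conclusion

variable {N : ℕ} [NeZero N] {n : ℕ} {a : Fin n → ZMod N} {m : Fin n → ℕ} {s : ℕ}

/-- The uniform density is a stage at `y`, with the covered mass estimated by the union bound. -/
lemma isStage_one (hm : ∀ i, m i ∣ N)
    (hs : ∀ m₀ : ℕ, (univ.filter fun i : Fin n => m i = m₀).card ≤ s)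
    {y : ℕ} (hy : 2 ≤ y) {ε M : ℝ} (hε0 : 0 ≤ ε) (hε : ε ≤ 1 / 2) (hM : 0 < M)
    (hmM : ∀ i, M < m i) :
    IsStage a m y (fun _ => 1)
      (s * (M ^ (-ε) * Real.exp (16 * Real.log y + 8 * (y : ℝ) ^ ε))) := by
  have hN : 0 < N := NeZero.pos N
  refine ⟨fun _ => zero_le_one, Fintype.expect_const _, fun _ _ => rfl, ?_, ?_⟩
  · intro d hd _ c
    simp only [one_mul]
    have hd0 : 0 < d := Nat.pos_of_dvd_of_pos hd hN
    refine (expect_ind_le hd c).trans ?_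
    unfold divisorDensity
    have h1 : (1 : ℝ) ≤ d.divisors.card := by
      exact_mod_cast Finset.card_pos.mpr (Nat.nonempty_divisors.mpr hd0.ne')
    gcongr
  · simp only [one_mul]
    set D := (smoothDivisors N y).filter fun l : ℕ => M < (l : ℝ) with hD
    set I : ℕ → Finset (Fin n) := fun l => univ.filter fun i => m i = l with hI
    set Z := D.sigma I with hZ
    have hb : ∀ x, covered a m y x ≤ ∑ z ∈ Z, ind z.1 (a z.2) x := by
      intro x
      unfold covered
      split_ifs with h
      · obtain ⟨i, h1, h2⟩ := h
        have hz : (⟨m i, i⟩ : Σ _ : ℕ, Fin n) ∈ Z :=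
          mem_sigma.mpr ⟨mem_filter.mpr ⟨(mem_smoothDivisors hN).mpr ⟨hm i, h1⟩, hmM i⟩,
            mem_filter.mpr ⟨mem_univ _, rfl⟩⟩
        refine le_trans ?_ (Finset.single_le_sum (f := fun z : Σ _ : ℕ, Fin n =>
          ind z.1 (a z.2) x) (fun z _ => ind_nonneg _ _ _) hz)
        simp only [ind]
        rw [if_pos h2]
      · exact Finset.sum_nonneg fun z _ => ind_nonneg _ _ _
    calc 𝔼 x, covered a m y x
        ≤ 𝔼 x, ∑ z ∈ Z, ind z.1 (a z.2) x := Finset.expect_le_expect fun x _ => hb x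
      _ = ∑ z ∈ Z, 𝔼 x, ind z.1 (a z.2) x := Finset.expect_sum_comm _ _ _
      _ ≤ ∑ z ∈ Z, 1 / (z.1 : ℝ) := by
          refine Finset.sum_le_sum fun z hz => expect_ind_le ?_ _
          exact ((mem_smoothDivisors hN).mp (mem_filter.mp (mem_sigma.mp hz).1).1).1
      _ ≤ s * ∑ l ∈ D, 1 / (l : ℝ) :=
          sum_sigma_le D I s hs (fun l => 1 / (l : ℝ)) fun _ => by positivity
      _ ≤ s * (M ^ (-ε) * ∑ l ∈ D, (l : ℝ) ^ (ε - 1)) := by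
          refine mul_le_mul_of_nonneg_left ?_ (Nat.cast_nonneg s)
          rw [Finset.mul_sum]
          refine Finset.sum_le_sum fun l hl => ?_
          have hl1 : M < (l : ℝ) := (mem_filter.mp hl).2
          have hl0 : (0 : ℝ) < l := hM.trans hl1
          -- Rankin's trick: `1 / l ≤ (l / M) ^ ε / l` for `l ≥ M`.
          have h1 : M ^ ε ≤ (l : ℝ) ^ ε := Real.rpow_le_rpow hM.le hl1.le hε0
          rw [Real.rpow_neg hM.le, Real.rpow_sub hl0, Real.rpow_one, ← mul_div_assoc]
          refine div_le_div_of_nonneg_right ?_ hl0.le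
          rw [inv_mul_eq_div, le_div_iff₀ (Real.rpow_pos_of_pos hM _), one_mul]
          exact h1
      _ ≤ _ := by
          refine mul_le_mul_of_nonneg_left (mul_le_mul_of_nonneg_left ?_
            (Real.rpow_nonneg hM.le _)) (Nat.cast_nonneg s)
          exact sum_smooth_rpow_le y hy ε hε D fun l hl =>
            ((mem_smoothDivisors hN).mp (mem_filter.mp hl).1).2

/-- The loss `4 k ^ (-3/2)` of one step is dominated by a telescoping difference. -/
lemma loss_le_sub {k : ℕ} (hk : 1 ≤ k) :
    (2 / (k : ℝ)) ^ 2 * √k ≤ 16 * (1 / √k - 1 / √((k + 1 : ℕ) : ℝ)) := by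
  have hk1 : (1 : ℝ) ≤ k := by exact_mod_cast hk
  obtain ⟨u, hu⟩ : ∃ u, u = √(k : ℝ) := ⟨_, rfl⟩
  obtain ⟨v, hv⟩ : ∃ v, v = √((k + 1 : ℕ) : ℝ) := ⟨_, rfl⟩
  have hu2 : u ^ 2 = k := by rw [hu]; exact Real.sq_sqrt (by linarith)
  have hv2 : v ^ 2 = u ^ 2 + 1 := by
    rw [hu2, hv, Real.sq_sqrt (by positivity)]; push_cast; ring
  have hu1 : 1 ≤ u := by rw [hu]; exact Real.one_le_sqrt.mpr hk1
  have hv0 : 0 < v := by rw [hv]; positivity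
  rw [← hu, ← hv, ← hu2]
  have h1 : (2 / u ^ 2) ^ 2 * u = 4 / u ^ 3 := by field_simp; norm_num
  have h2 : 16 * (1 / u - 1 / v) = 16 * (v - u) / (u * v) := by field_simp
  rw [h1, h2, div_le_div_iff₀ (by positivity) (by positivity)]
  have h3 : v * (u + v) ≤ 4 * u ^ 2 := by nlinarith [sq_nonneg (u - v)]
  have h4 : (v - u) * (u + v) = 1 := by linarith
  have h5 : v ≤ 4 * u ^ 2 * (v - u) := by
    have h6 : v - u > 0 := by
      by_contra h
      nlinarith
    calc v = v * (u + v) * (v - u) := by rw [mul_assoc, mul_comm (u + v), h4, mul_one]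
      _ ≤ _ := mul_le_mul_of_nonneg_right h3 h6.le
  nlinarith

lemma IsStage.iterate (hm : ∀ i, m i ∣ N)
    (hs : ∀ m₀ : ℕ, (univ.filter fun i : Fin n => m i = m₀).card ≤ s)
    {C : ℝ} (hC0 : 0 < C)
    (hC : ∀ (k : ℕ), 1 ≤ k → ∀ D : Finset ℕ, (∀ l ∈ D, l ∈ k.smoothNumbers) →
      ∑ l ∈ D, (l.divisors.card : ℝ) ^ 2 * divisorDensity l ≤ C * √k)
    {y : ℕ} (hy : 1 ≤ y) {w : ZMod N → ℝ} {ε : ℝ} (hw : IsStage a m y w ε) (j : ℕ) :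
    ∃ w', IsStage a m (y + j) w'
      (ε + 16 * C * (s : ℝ) ^ 2 * (1 / √y - 1 / √((y + j : ℕ) : ℝ))) := by
  induction j with
  | zero => exact ⟨w, by simpa using hw⟩
  | succ j ih =>
    obtain ⟨w₁, h₁⟩ := ih
    obtain ⟨w₂, h₂⟩ := h₁.succ hm hs hC0 hC
    refine ⟨w₂, h₂.nonneg, h₂.mean, h₂.periodic, h₂.density, h₂.covered_le.trans ?_⟩
    have h3 := mul_le_mul_of_nonneg_left (loss_le_sub (k := y + j) (by omega))
      (show 0 ≤ C * (s : ℝ) ^ 2 by positivity)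
    rw [← add_assoc y j 1]
    linarith

/-- If progressions with moduli larger than `M` cover, the total mass `1` is bounded by the union
bound for the primes below `y` plus the accumulated loss over the primes from `y` on. -/
lemma one_le_loss (hm : ∀ i, m i ∣ N)
    (hs : ∀ m₀ : ℕ, (univ.filter fun i : Fin n => m i = m₀).card ≤ s)
    (hcov : ∀ x, ∃ i, (m i : ZMod N) ∣ x - a i)
    {C : ℝ} (hC0 : 0 < C)
    (hC : ∀ (k : ℕ), 1 ≤ k → ∀ D : Finset ℕ, (∀ l ∈ D, l ∈ k.smoothNumbers) →
      ∑ l ∈ D, (l.divisors.card : ℝ) ^ 2 * divisorDensity l ≤ C * √k)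
    {y : ℕ} (hy : 2 ≤ y) {ε M : ℝ} (hε0 : 0 ≤ ε) (hε : ε ≤ 1 / 2) (hM : 0 < M)
    (hmM : ∀ i, M < m i) :
    1 ≤ s * (M ^ (-ε) * Real.exp (16 * Real.log y + 8 * (y : ℝ) ^ ε)) +
      16 * C * (s : ℝ) ^ 2 / √y := by
  have hN : 0 < N := NeZero.pos N
  obtain ⟨w, hw⟩ := (isStage_one (a := a) hm hs hy hε0 hε hM hmM).iterate hm hs hC0 hC
    (by omega) (N + 1)
  have h1 : ∀ x, covered a m (y + (N + 1)) x = 1 := by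
    intro x
    obtain ⟨i, hi⟩ := hcov x
    refine if_pos ⟨i, Nat.mem_smoothNumbers'.mpr fun p _ hpm => ?_, hi⟩
    have := Nat.le_of_dvd hN (hpm.trans (hm i))
    omega
  have h2 := hw.covered_le
  simp only [h1, mul_one, hw.mean] at h2
  refine h2.trans (add_le_add le_rfl ?_)
  rw [mul_sub, mul_one_div]
  have : 0 ≤ 16 * C * (s : ℝ) ^ 2 * (1 / √((y + (N + 1) : ℕ) : ℝ)) := by positivity
  linarith

end Conclusion

/-! ### Choice of parameters -/

lemma log_three_gt_one : 1 < Real.log 3 := by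
  rw [Real.lt_log_iff_exp_lt (by norm_num)]
  exact Real.exp_one_lt_three

/-- With `y = (s + 2) ^ (2h)` and `M` the bound of the theorem for `c = 480 h²`, the union bound for
the primes below `y` is less than `1 / 2` for a suitable Rankin exponent `ε`. -/
lemma small_stage_lt {h s : ℕ} (hh : 1 ≤ h) (hs : 1 ≤ s) :
    ∃ ε : ℝ, 0 ≤ ε ∧ ε ≤ 1 / 2 ∧
      s * (Real.exp (480 * (h : ℝ) ^ 2 * Real.log (s + 1) ^ 2 / Real.log (Real.log (s + 2))) ^ (-ε)
        * Real.exp (16 * Real.log (((s + 2) ^ (2 * h) : ℕ) : ℝ) +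
          8 * (((s + 2) ^ (2 * h) : ℕ) : ℝ) ^ ε)) < 1 / 2 := by
  have hs1 : (1 : ℝ) ≤ s := by exact_mod_cast hs
  have hh1 : (1 : ℝ) ≤ h := by exact_mod_cast hh
  obtain ⟨t, ht⟩ : ∃ t, t = Real.log ((s : ℝ) + 2) := ⟨_, rfl⟩
  have ht1 : 1 < t := by
    rw [ht]
    exact log_three_gt_one.trans_le (Real.log_le_log (by norm_num) (by linarith))
  obtain ⟨L, hL⟩ : ∃ L, L = 2 * h * t := ⟨_, rfl⟩
  have htL : t ≤ L := by rw [hL]; nlinarith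
  have hL1 : 1 < L := ht1.trans_le htL
  have hlogy : Real.log (((s + 2) ^ (2 * h) : ℕ) : ℝ) = L := by
    push_cast
    rw [Real.log_pow, hL, ht]; push_cast; ring
  have hlt : 0 < Real.log t := Real.log_pos ht1
  have hlL : Real.log t ≤ Real.log L := Real.log_le_log (by linarith) htL
  -- With this exponent, `y ^ ε = log y`.
  refine ⟨Real.log L / L, div_nonneg (hlt.le.trans hlL) (by linarith), ?_, ?_⟩
  · rw [div_le_iff₀ (by linarith)]
    have h1 := Real.log_le_sub_one_of_pos (show 0 < L / 2 by linarith)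
    rw [Real.log_div (by linarith) (by norm_num)] at h1
    have h2 := Real.log_two_lt_d9
    linarith
  · have hye : (((s + 2) ^ (2 * h) : ℕ) : ℝ) ^ (Real.log L / L) = L := by
      rw [Real.rpow_def_of_pos (by positivity), hlogy, mul_div_cancel₀ _ (by linarith),
        Real.exp_log (by linarith)]
    rw [hye, hlogy, ← ht, ← Real.exp_mul]
    have hl2 : t ≤ 2 * Real.log (s + 1) := by
      rw [ht]
      have : 2 * Real.log ((s : ℝ) + 1) = Real.log (((s : ℝ) + 1) ^ 2) := by
        rw [Real.log_pow]; norm_num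
      rw [this]
      exact Real.log_le_log (by linarith) (by nlinarith)
    have hl0 : 0 < Real.log ((s : ℝ) + 1) := Real.log_pos (by linarith)
    have hmain : 30 * L ≤ 480 * (h : ℝ) ^ 2 * Real.log (s + 1) ^ 2 / Real.log t *
        (Real.log L / L) := by
      have h1 : 30 * L ^ 2 ≤ 480 * (h : ℝ) ^ 2 * Real.log (s + 1) ^ 2 := by
        have : t ^ 2 ≤ (2 * Real.log (s + 1)) ^ 2 := pow_le_pow_left₀ (by linarith) hl2 2
        rw [hL]
        nlinarith [mul_le_mul_of_nonneg_left this (sq_nonneg (h : ℝ))]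
      rw [div_mul_div_comm, le_div_iff₀ (by positivity)]
      calc 30 * L * (Real.log t * L) = 30 * L ^ 2 * Real.log t := by ring
        _ ≤ _ := mul_le_mul h1 hlL hlt.le (by positivity)
    have hsL : (s : ℝ) ≤ Real.exp L := by
      calc (s : ℝ) ≤ s + 2 := by linarith
        _ = Real.exp t := by rw [ht, Real.exp_log (by linarith)]
        _ ≤ Real.exp L := Real.exp_le_exp.mpr htL
    rw [← Real.exp_add]
    calc (s : ℝ) * Real.exp (480 * (h : ℝ) ^ 2 * Real.log (s + 1) ^ 2 / Real.log t *
          -(Real.log L / L) + (16 * L + 8 * L))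
        ≤ Real.exp L * Real.exp (-6 * L) := by
          refine mul_le_mul hsL (Real.exp_le_exp.mpr ?_) (Real.exp_pos _).le (Real.exp_pos _).le
          rw [mul_neg]
          linarith
      _ = Real.exp (-(5 * L)) := by rw [← Real.exp_add]; congr 1; ring
      _ < 1 / 2 := by
          rw [Real.exp_neg, ← one_div]
          refine one_div_lt_one_div_of_lt (by norm_num) ?_
          have := Real.add_one_le_exp (5 * L)
          linarith

/-- For a suitable `h`, the loss over the primes from `y = (s + 2) ^ (2h)` on is at most `1 / 2`,
uniformly in `s`. -/
lemma large_stage_le {C : ℝ} : ∃ h : ℕ, 1 ≤ h ∧ ∀ s : ℕ, 1 ≤ s →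
    16 * C * (s : ℝ) ^ 2 / √(((s + 2) ^ (2 * h) : ℕ) : ℝ) ≤ 1 / 2 := by
  obtain ⟨j, hj⟩ := pow_unbounded_of_one_lt (32 * C) (show (1 : ℝ) < 3 by norm_num)
  refine ⟨j + 2, by omega, fun s hs => ?_⟩
  have hs1 : (1 : ℝ) ≤ s := by exact_mod_cast hs
  have h1 : √(((s + 2) ^ (2 * (j + 2)) : ℕ) : ℝ) = ((s : ℝ) + 2) ^ (j + 2) := by
    push_cast
    rw [mul_comm 2 (j + 2), pow_mul, Real.sqrt_sq (by positivity)]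
  rw [h1, div_le_iff₀ (by positivity), pow_add]
  have h2 : (3 : ℝ) ^ j ≤ ((s : ℝ) + 2) ^ j := pow_le_pow_left₀ (by norm_num) (by linarith) j
  have h3 : (s : ℝ) ^ 2 ≤ ((s : ℝ) + 2) ^ 2 := pow_le_pow_left₀ (by linarith) (by linarith) 2
  have h4 : 32 * C * (s : ℝ) ^ 2 ≤ ((s : ℝ) + 2) ^ j * ((s : ℝ) + 2) ^ 2 :=
    mul_le_mul (hj.le.trans h2) h3 (by positivity) (by positivity)
  linarith

end CoveringSystems

/-- Bound on the smallest modulus of a covering system of ℤ of multiplicity `s`. -/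
theorem minimum_modulus_int :
    ∃ c : ℝ, 0 < c ∧
      ∀ (n : ℕ) (hn : 0 < n) (a : Fin n → ℤ) (m : Fin n → ℕ) (s : ℕ),
        (∀ i : Fin n, 1 ≤ m i) →
        (∀ x : ℤ, ∃ i : Fin n, (m i : ℤ) ∣ (x - a i)) →
        (∀ m₀ : ℕ, (Finset.univ.filter fun i : Fin n => m i = m₀).card ≤ s) →
        (∃ m₀ : ℕ, (Finset.univ.filter fun i : Fin n => m i = m₀).card = s) →
        ∃ i : Fin n, (m i : ℝ) ≤
          Real.exp (c * (Real.log (s + 1)) ^ 2 / Real.log (Real.log (s + 2))) := by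
  obtain ⟨C, hC0, hC⟩ := CoveringSystems.exists_sum_smooth_divisors_le
  obtain ⟨h, hh, hlarge⟩ := CoveringSystems.large_stage_le (C := C)
  have hh0 : (0 : ℝ) < h := by exact_mod_cast hh
  refine ⟨480 * (h : ℝ) ^ 2, by positivity, fun n hn a m s hm1 hcov hs _ => ?_⟩
  by_contra! hlt
  have hs1 : 1 ≤ s :=
    le_trans (Finset.card_pos.mpr ⟨⟨0, hn⟩, by simp⟩) (hs (m ⟨0, hn⟩))
  obtain ⟨ε, hε0, hε, hsmall⟩ := CoveringSystems.small_stage_lt hh hs1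
  set N := ∏ i, m i with hN
  have : NeZero N := ⟨Finset.prod_ne_zero_iff.mpr fun i _ => by have := hm1 i; omega⟩
  have hmN : ∀ i, m i ∣ N := fun i => Finset.dvd_prod_of_mem m (Finset.mem_univ i)
  have hcov' : ∀ x : ZMod N, ∃ i, (m i : ZMod N) ∣ x - ((a i : ℤ) : ZMod N) := by
    intro x
    obtain ⟨i, hi⟩ := hcov x.val
    refine ⟨i, ?_⟩
    have := (CoveringSystems.natCast_dvd_intCast_iff (hmN i) _).mpr hi
    push_cast at this
    rwa [ZMod.natCast_zmod_val] at this
  have hy : 2 ≤ (s + 2) ^ (2 * h) :=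
    le_trans (by omega) (Nat.le_self_pow (by omega) (s + 2))
  have h1 := CoveringSystems.one_le_loss (s := s) (a := fun i => ((a i : ℤ) : ZMod N)) hmN hs
    hcov' hC0 hC hy hε0 hε (Real.exp_pos _) hlt
  have h2 := hlarge s hs1
  linarith
end
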